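/- arXiv:2604.23936 — 9 statements merged into one kernel-verified Lean document; each statement's English description precedes it below -/
import Mathlib

section
/- Let X be an mm space of finite diameter and let (Y_n,o_n), (Y,o) be pointed proper metric spaces such that (Y_n,o_n) converges to (Y,o) in the pointed Gromov–Hausdorff sense. Then for every κ ∈ (0,1), ObsDiam_Y(X;−κ) ≤ lim_{ε→0+} liminf_{n→∞} ObsDiam_{Y_n}^ε(X;−κ), where the limit in ε exists since ε ↦ liminf_n ObsDiam_{Y_n}^ε(X;−κ) is nondecreasing. -/
/-!
The proof pushes a 1-Lipschitz map `F : X → Z` forward along the Gromov–Hausdorff approximations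
`f n`. Since `X` has finite diameter, the image of `F` lies in a ball around `oZ`, hence in the
domain of `f n` for all large `n`. The composite `f n ∘ F` is 1-Lipschitz with error `ε n`, and
because `f n` distorts distances by less than `ε n`, its partial diameter is at most `ε n` smaller
than that of `F` (`partialDiam_map_le_add`). Letting `n → ∞` gives the inequality for
every fixed error.
-/

open MeasureTheory Metric Filter Set Topology ENNReal NNReal

noncomputable section

/-- Partial diameter `Diam(μ; 1-κ)` of a Borel measure on a metric space. -/
def partialDiam {Z : Type*} [MetricSpace Z] [MeasurableSpace Z]
    (μ : Measure Z) (κ : ℝ) : ℝ≥0∞ :=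
  ⨅ (A : Set Z) (_ : MeasurableSet A) (_ : ENNReal.ofReal (1 - κ) ≤ μ A), EMetric.diam A

/-- Observable diameter `ObsDiam_Y(X; -κ)`. -/
def obsDiam (X Y : Type*) [MetricSpace X] [MeasurableSpace X]
    [MetricSpace Y] [MeasurableSpace Y] (μ : Measure X) (κ : ℝ) : ℝ≥0∞ :=
  ⨆ (f : X → Y) (_ : LipschitzWith 1 f), partialDiam (μ.map f) κ

/-- The set of 1-Lipschitz maps. -/
def lipMaps (X Y : Type*) [MetricSpace X] [MetricSpace Y] : Set (X → Y) :=
  {f | LipschitzWith 1 f}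

/-- Borel maps that are 1-Lipschitz with additive error δ. -/
def lipErr (X Y : Type*) [MetricSpace X] [MeasurableSpace X]
    [MetricSpace Y] [MeasurableSpace Y] (δ : ℝ) : Set (X → Y) :=
  {f | Measurable f ∧ ∀ z₁ z₂ : X, dist (f z₁) (f z₂) ≤ dist z₁ z₂ + δ}

/-- Borel maps that are almost 1-Lipschitz with error δ. -/
def almostLipErr (X Y : Type*) [MetricSpace X] [MeasurableSpace X]
    [MetricSpace Y] [MeasurableSpace Y] (μ : Measure X) (δ : ℝ) : Set (X → Y) :=
  {f | Measurable f ∧ ∃ X' : Set X, MeasurableSet X' ∧ ENNReal.ofReal (1 - δ) ≤ μ X' ∧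
    ∀ z₁ ∈ X', ∀ z₂ ∈ X', dist (f z₁) (f z₂) ≤ dist z₁ z₂ + δ}

/-- `ObsDiam_Y^δ(X;-κ)`. -/
def obsDiamErr (X Y : Type*) [MetricSpace X] [MeasurableSpace X]
    [MetricSpace Y] [MeasurableSpace Y] (μ : Measure X) (δ κ : ℝ) : ℝ≥0∞ :=
  ⨆ f ∈ lipErr X Y δ, partialDiam (μ.map f) κ

/-- `t-ObsDiam_Y^δ(X;-κ)`. -/
def tObsDiamErr (X Y : Type*) [MetricSpace X] [MeasurableSpace X]
    [MetricSpace Y] [MeasurableSpace Y] (μ : Measure X) (δ κ : ℝ) : ℝ≥0∞ :=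
  ⨆ f ∈ almostLipErr X Y μ δ, partialDiam (μ.map f) κ

/-- `ObsDiam_Y^+(X;-κ) = lim_{δ↓0} ObsDiam_Y^δ(X;-κ)`, which equals the infimum by
monotonicity in `δ`. -/
def obsDiamPlus (X Y : Type*) [MetricSpace X] [MeasurableSpace X]
    [MetricSpace Y] [MeasurableSpace Y] (μ : Measure X) (κ : ℝ) : ℝ≥0∞ :=
  ⨅ (δ : ℝ) (_ : 0 < δ), obsDiamErr X Y μ δ κ

/-- `t-ObsDiam_Y^+(X;-κ) = lim_{δ↓0} t-ObsDiam_Y^δ(X;-κ)`. -/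
def tObsDiamPlus (X Y : Type*) [MetricSpace X] [MeasurableSpace X]
    [MetricSpace Y] [MeasurableSpace Y] (μ : Measure X) (κ : ℝ) : ℝ≥0∞ :=
  ⨅ (δ : ℝ) (_ : 0 < δ), tObsDiamErr X Y μ δ κ

/-- Ky Fan distance between measurable maps. -/
def kyFanDist {X Y : Type*} [MeasurableSpace X] [MetricSpace Y]
    (μ : Measure X) (f g : X → Y) : ℝ :=
  sInf {ε : ℝ | 0 ≤ ε ∧ μ {x | ε < dist (f x) (g x)} ≤ ENNReal.ofReal ε}

/-- Hausdorff distance (w.r.t. the Ky Fan metric) between two sets of maps. -/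
def hausKyFan {X Y : Type*} [MeasurableSpace X] [MetricSpace Y] (μ : Measure X)
    (A B : Set (X → Y)) : ℝ :=
  max (⨆ f ∈ A, ⨅ g ∈ B, kyFanDist μ f g) (⨆ g ∈ B, ⨅ f ∈ A, kyFanDist μ f g)

/-- A family of metric spaces `𝒴 i` is Lipschitz-approximated to `(X, μ)`. -/
def LipApproxFamily (X : Type*) [MetricSpace X] [MeasurableSpace X] (μ : Measure X)
    {ι : Type*} (𝒴 : ι → Type*) [∀ i, MetricSpace (𝒴 i)] [∀ i, MeasurableSpace (𝒴 i)] : Prop :=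
  Tendsto (fun δ : ℝ => ⨆ i, hausKyFan μ (lipMaps X (𝒴 i)) (almostLipErr X (𝒴 i) μ δ))
    (nhdsWithin 0 (Set.Ioi 0)) (nhds 0)

/-- One-sided Prokhorov distance. -/
def prokhorovDist {Z : Type*} [MetricSpace Z] [MeasurableSpace Z] (μ ν : Measure Z) : ℝ :=
  sInf {ε : ℝ | 0 < ε ∧ ∀ A : Set Z, MeasurableSet A →
    ν A ≤ μ (Metric.thickening ε A) + ENNReal.ofReal ε}

/-- ε-mm isomorphism. -/
def IsMMIso {X Y : Type*} [MetricSpace X] [MeasurableSpace X] [MetricSpace Y] [MeasurableSpace Y]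
    (μX : Measure X) (μY : Measure Y) (ε : ℝ) (f : X → Y) : Prop :=
  Measurable f ∧
  (∃ X' : Set X, MeasurableSet X' ∧ ENNReal.ofReal (1 - ε) ≤ μX X' ∧
    ∀ x₁ ∈ X', ∀ x₂ ∈ X', |dist x₁ x₂ - dist (f x₁) (f x₂)| ≤ ε) ∧
  prokhorovDist (μX.map f) μY ≤ ε

/-- ε-approximation map between metric spaces. -/
def IsApproxMap {Y Z : Type*} [MetricSpace Y] [MeasurableSpace Y]
    [MetricSpace Z] [MeasurableSpace Z] (ε : ℝ) (f : Y → Z) : Prop :=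
  Measurable f ∧ (∀ y₁ y₂ : Y, |dist y₁ y₂ - dist (f y₁) (f y₂)| < ε) ∧
  Metric.thickening ε (Set.range f) = Set.univ

/-- Pointed Gromov–Hausdorff convergence of a sequence of pointed proper metric spaces
`(Y n, o n)` to `(Z, oZ)`. -/
def PGHTendsto (Y : ℕ → Type*) [∀ n, MetricSpace (Y n)] [∀ n, MeasurableSpace (Y n)]
    (o : ∀ n, Y n) (Z : Type*) [MetricSpace Z] [MeasurableSpace Z] (oZ : Z) : Prop :=
  ∃ (R ε : ℕ → ℝ) (f : ∀ n, Metric.closedBall oZ (R n) → Y n),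
    Monotone R ∧ Tendsto R atTop atTop ∧
    Antitone ε ∧ (∀ n, 0 < ε n) ∧ Tendsto ε atTop (nhds 0) ∧
    (∀ n, Measurable (f n)) ∧
    (∀ n, ∀ z₁ z₂ : Metric.closedBall oZ (R n),
      |dist (f n z₁) (f n z₂) - dist (z₁ : Z) (z₂ : Z)| < ε n) ∧
    (∀ n, Metric.closedBall (o n) (R n - ε n) ⊆ Metric.thickening (ε n) (Set.range (f n)))

/-- Distortion of a subset of `X × Y`. -/
def setDis {X Y : Type*} [MetricSpace X] [MetricSpace Y] (S : Set (X × Y)) : ℝ≥0∞ :=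
  ⨆ (p ∈ S) (q ∈ S), ENNReal.ofReal |dist p.1 q.1 - dist p.2 q.2|

/-- The box distance. -/
def boxDist {X Y : Type*} [MetricSpace X] [MeasurableSpace X] [MetricSpace Y] [MeasurableSpace Y]
    (μX : Measure X) (μY : Measure Y) : ℝ≥0∞ :=
  ⨅ (ξ : Measure (X × Y)) (_ : ξ.map Prod.fst = μX ∧ ξ.map Prod.snd = μY)
    (S : Set (X × Y)) (_ : MeasurableSet S), max (1 - ξ S) (setDis S)


/-- If `g` distances are at most `δ` smaller than `F` distances, then so is the partial
diameter: a set `A` of large `g`-mass yields the set `closure (F '' (g ⁻¹' A))`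
of large `F`-mass, the closure serving to make it measurable. -/
lemma partialDiam_map_le_add {X Y Z : Type*} [MeasurableSpace X] [MetricSpace Y]
    [MeasurableSpace Y] [MetricSpace Z] [MeasurableSpace Z] [BorelSpace Z] (μ : Measure X)
    {F : X → Z} {g : X → Y} (hF : Measurable F) (hg : Measurable g) (κ : ℝ) (δ : ℝ≥0)
    (h : ∀ x y, dist (F x) (F y) ≤ dist (g x) (g y) + δ) :
    partialDiam (μ.map F) κ ≤ partialDiam (μ.map g) κ + δ := by
  rw [← tsub_le_iff_right]
  refine le_iInf fun A => le_iInf fun hA => le_iInf fun hmass => ?_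
  rw [tsub_le_iff_right]
  have hB : MeasurableSet (closure (F '' (g ⁻¹' A))) := isClosed_closure.measurableSet
  have hBmass : ENNReal.ofReal (1 - κ) ≤ μ.map F (closure (F '' (g ⁻¹' A))) := by
    rw [Measure.map_apply hF hB]
    rw [Measure.map_apply hg hA] at hmass
    exact hmass.trans
      (measure_mono fun x hx => subset_closure (mem_image_of_mem F hx))
  refine iInf_le_of_le (closure (F '' (g ⁻¹' A))) (iInf₂_le_of_le hB hBmass ?_)
  change Metric.ediam _ ≤ Metric.ediam A + _
  rw [Metric.ediam_closure]
  refine Metric.ediam_le ?_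
  rintro _ ⟨x, hx, rfl⟩ _ ⟨y, hy, rfl⟩
  calc edist (F x) (F y) ≤ edist (g x) (g y) + δ := by
        rw [edist_dist, edist_dist, ← ENNReal.ofReal_coe_nnreal,
          ← ENNReal.ofReal_add dist_nonneg δ.coe_nonneg]
        exact ENNReal.ofReal_le_ofReal (h x y)
    _ ≤ Metric.ediam A + δ := by gcongr; exact Metric.edist_le_ediam_of_mem hx hy

/-- If `X` is an mm space of finite diameter and `(Y_n, o_n) → (Z, oZ)` in the
pointed Gromov–Hausdorff sense (all spaces proper), then for every `κ ∈ (0,1)`,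
`ObsDiam_Z(X;-κ) ≤ lim_{ε→0+} liminf_n ObsDiam_{Y_n}^ε(X;-κ)`, the limit in `ε` being the
infimum over `ε > 0` by monotonicity. -/
theorem obsDiam_le_lim_liminf_obsDiamErr_of_pGH
    {X : Type*} [MetricSpace X] [CompleteSpace X] [TopologicalSpace.SeparableSpace X]
    [MeasurableSpace X] [BorelSpace X] (μ : Measure X) [IsProbabilityMeasure μ]
    [μ.IsOpenPosMeasure]
    (hdiam : EMetric.diam (Set.univ : Set X) ≠ ⊤)
    (Y : ℕ → Type*) [∀ n, MetricSpace (Y n)] [∀ n, MeasurableSpace (Y n)]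
    [∀ n, BorelSpace (Y n)] [∀ n, ProperSpace (Y n)] (o : ∀ n, Y n)
    (Z : Type*) [MetricSpace Z] [MeasurableSpace Z] [BorelSpace Z] [ProperSpace Z] (oZ : Z)
    (hpGH : PGHTendsto Y o Z oZ) :
    ∀ κ ∈ Set.Ioo (0 : ℝ) 1,
      obsDiam X Z μ κ ≤
        ⨅ (ε : ℝ) (_ : 0 < ε), liminf (fun n => obsDiamErr X (Y n) μ ε κ) atTop := by
  intro κ _
  obtain ⟨R, ε, f, -, hR, -, -, hε, hfm, hfd, -⟩ := hpGH
  refine iSup_le fun F => iSup_le fun hF => le_iInf fun e => le_iInf fun he => ?_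
  refine ENNReal.le_of_forall_pos_le_add fun δ hδ _ => ?_
  rw [← tsub_le_iff_right]
  refine le_liminf_of_le (by isBoundedDefault) ?_
  have hbdd : Bornology.IsBounded (range F) := by
    rw [← image_univ]
    exact hF.isBounded_image (Metric.isBounded_iff_ediam_ne_top.2 hdiam)
  obtain ⟨r, hr⟩ := hbdd.subset_closedBall oZ
  filter_upwards [hR.eventually_ge_atTop r, hε.eventually_lt_const he,
    hε.eventually_lt_const (show (0 : ℝ) < δ from hδ)] with n hRn hen hδn
  have hmem : ∀ x, F x ∈ closedBall oZ (R n) := fun x =>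
    closedBall_subset_closedBall hRn (hr (mem_range_self x))
  have hFm : Measurable F := hF.continuous.measurable
  have hgm : Measurable fun x => f n ⟨F x, hmem x⟩ := (hfm n).comp (hFm.subtype_mk)
  have hdist : ∀ x y, |dist (f n ⟨F x, hmem x⟩) (f n ⟨F y, hmem y⟩) - dist (F x) (F y)| < ε n :=
    fun x y => hfd n ⟨F x, hmem x⟩ ⟨F y, hmem y⟩
  rw [tsub_le_iff_right]
  refine (partialDiam_map_le_add μ hFm hgm κ δ fun x y => ?_).trans ?_
  · linarith [(abs_lt.1 (hdist x y)).1]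
  · gcongr
    refine le_iSup₂_of_le (fun x => f n ⟨F x, hmem x⟩) ⟨hgm, fun x y => ?_⟩ le_rfl
    have hFd : dist (F x) (F y) ≤ dist x y := by simpa using hF.dist_le_mul x y
    linarith [(abs_lt.1 (hdist x y)).2]

end
end

section
/- Let X be an mm space and let Y_n, Y be nonempty compact metric spaces such that d_GH(Y_n,Y) → 0, where d_GH is the Gromov–Hausdorff distance. Then for every κ ∈ (0,1): (i) ObsDiam_Y(X;−κ) ≤ lim_{ε→0+} liminf_{n→∞} ObsDiam_{Y_n}^ε(X;−κ), and (ii) ObsDiam_Y^+(X;−κ) ≥ limsup_{n→∞} ObsDiam_{Y_n}(X;−κ). -/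
/-!
If `d_GH(A, B)` is small, the optimal coupling of `A` and `B` provides a Borel map `g : A → B` which
distorts distances by at most a small `η` (`exists_measurable_distortion_le` and the two lemmas that
follow it). Composing with `g` turns a Borel map `f : X → A` that is `1`-Lipschitz with error `δ` into
a Borel map `g ∘ f : X → B` that is `1`-Lipschitz with error `δ + η`. Pulling a Borel subset of `B`
back along `g` preserves its measure and raises its diameter by at most `η`, so passing from `f` to
`g ∘ f` lowers the partial diameter of the push-forward by at most `η`. Hence
`ObsDiam_A(X; -κ) ≤ ObsDiam_B^η(X; -κ) + η` (`obsDiam_le_obsDiamErr_add`). Part (i) is this inequality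
with `A = Z`, `B = Y n`, and part (ii) is the one with `A = Y n`, `B = Z`; in both, `η` is arbitrary.
-/

open MeasureTheory Metric Filter Set Topology ENNReal NNReal

noncomputable section

/-- Discretizing `A` on a dense sequence makes the (choice-made, a priori non-measurable) map to
nearby points of `B` countably valued and Borel, at the cost of doubling the distortion. -/
theorem exists_measurable_distortion_le {A B C : Type*} [MetricSpace A] [CompactSpace A]
    [Nonempty A] [MeasurableSpace A] [BorelSpace A] [MetricSpace B] [MeasurableSpace B]
    [MetricSpace C] {Φ : A → C} {Ψ : B → C} (hΦ : Isometry Φ) (hΨ : Isometry Ψ) {r : ℝ}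
    (hr : 0 < r) (h : ∀ a, ∃ b, dist (Φ a) (Ψ b) < r) :
    ∃ g : A → B, Measurable g ∧ ∀ a₁ a₂, |dist (g a₁) (g a₂) - dist a₁ a₂| ≤ 4 * r := by
  classical
  choose ψ hψ using h
  have hex : ∀ a : A, ∃ n, dist (TopologicalSpace.denseSeq A n) a < r := fun a => by
    obtain ⟨n, hb⟩ := (TopologicalSpace.denseRange_denseSeq A).exists_mem_open
      isOpen_ball ⟨a, mem_ball_self hr⟩
    exact ⟨n, hb⟩
  let N : A → ℕ := fun a => Nat.find (hex a)
  have hN : Measurable N := measurable_find hex fun n =>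
    (isOpen_lt (by fun_prop) (by fun_prop)).measurableSet
  refine ⟨fun a => ψ (TopologicalSpace.denseSeq A (N a)),
    (measurable_from_top (f := fun n => ψ (TopologicalSpace.denseSeq A n))).comp hN, ?_⟩
  have key : ∀ a, dist (Ψ (ψ (TopologicalSpace.denseSeq A (N a)))) (Φ a) ≤ 2 * r := fun a => by
    have h1 := hψ (TopologicalSpace.denseSeq A (N a))
    have h2 : dist (TopologicalSpace.denseSeq A (N a)) a < r := Nat.find_spec (hex a)
    rw [← hΦ.dist_eq] at h2
    rw [dist_comm] at h1
    linarith [dist_triangle (Ψ (ψ (TopologicalSpace.denseSeq A (N a))))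
      (Φ (TopologicalSpace.denseSeq A (N a))) (Φ a)]
  intro a₁ a₂
  rw [← hΨ.dist_eq, ← hΦ.dist_eq a₁ a₂, ← Real.dist_eq]
  exact (dist_dist_dist_le _ _ _ _).trans (by linarith [key a₁, key a₂])

theorem exists_measurable_of_ghDist_lt {A B : Type*} [MetricSpace A] [CompactSpace A]
    [Nonempty A] [MeasurableSpace A] [BorelSpace A] [MetricSpace B] [CompactSpace B] [Nonempty B]
    [MeasurableSpace B] {r : ℝ} (h : GromovHausdorff.ghDist A B < r) :
    ∃ g : A → B, Measurable g ∧ ∀ a₁ a₂, |dist (g a₁) (g a₂) - dist a₁ a₂| ≤ 4 * r := by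
  rw [← GromovHausdorff.hausdorffDist_optimal] at h
  have hl := GromovHausdorff.isometry_optimalGHInjl A B
  have hr := GromovHausdorff.isometry_optimalGHInjr A B
  refine exists_measurable_distortion_le hl hr (hausdorffDist_nonneg.trans_lt h) fun a => ?_
  obtain ⟨_, ⟨b, rfl⟩, hb⟩ := exists_dist_lt_of_hausdorffDist_lt (mem_range_self a) h
    (hausdorffEDist_ne_top_of_nonempty_of_bounded (range_nonempty _) (range_nonempty _)
      (isCompact_range hl.continuous).isBounded (isCompact_range hr.continuous).isBounded)
  exact ⟨b, hb⟩

/-- The map in the opposite direction, obtained from the other half of the Hausdorff distance of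
the optimal coupling. -/
theorem exists_measurable_of_ghDist_lt' {A B : Type*} [MetricSpace A] [CompactSpace A]
    [Nonempty A] [MeasurableSpace A] [MetricSpace B] [CompactSpace B] [Nonempty B]
    [MeasurableSpace B] [BorelSpace B] {r : ℝ} (h : GromovHausdorff.ghDist A B < r) :
    ∃ g : B → A, Measurable g ∧ ∀ b₁ b₂, |dist (g b₁) (g b₂) - dist b₁ b₂| ≤ 4 * r := by
  rw [← GromovHausdorff.hausdorffDist_optimal] at h
  have hl := GromovHausdorff.isometry_optimalGHInjl A B
  have hr := GromovHausdorff.isometry_optimalGHInjr A B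
  refine exists_measurable_distortion_le hr hl (hausdorffDist_nonneg.trans_lt h) fun b => ?_
  obtain ⟨_, ⟨a, rfl⟩, ha⟩ := exists_dist_lt_of_hausdorffDist_lt' (mem_range_self b) h
    (hausdorffEDist_ne_top_of_nonempty_of_bounded (range_nonempty _) (range_nonempty _)
      (isCompact_range hl.continuous).isBounded (isCompact_range hr.continuous).isBounded)
  exact ⟨a, by rwa [dist_comm]⟩

theorem partialDiam_map_le_add_s4 {X A B : Type*} [MeasurableSpace X] [MetricSpace A]
    [MeasurableSpace A] [MetricSpace B] [MeasurableSpace B] (μ : Measure X) (κ : ℝ)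
    {f : X → A} (hf : Measurable f) {g : A → B} (hg : Measurable g) {η : ℝ}
    (hd : ∀ a₁ a₂, dist a₁ a₂ ≤ dist (g a₁) (g a₂) + η) :
    partialDiam (μ.map f) κ ≤ partialDiam (μ.map (g ∘ f)) κ + ENNReal.ofReal η := by
  rw [← tsub_le_iff_right]
  refine le_iInf fun S => le_iInf fun hS => le_iInf fun hμ => ?_
  rw [tsub_le_iff_right]
  rw [← Measure.map_map hg hf, Measure.map_apply hg hS] at hμ
  refine (iInf₂_le_of_le (g ⁻¹' S) (hg hS) (iInf_le _ hμ)).trans ?_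
  refine Metric.ediam_le fun a₁ h₁ a₂ h₂ => ?_
  calc edist a₁ a₂ = ENNReal.ofReal (dist a₁ a₂) := edist_dist _ _
    _ ≤ ENNReal.ofReal (dist (g a₁) (g a₂) + η) := ENNReal.ofReal_le_ofReal (hd a₁ a₂)
    _ ≤ ENNReal.ofReal (dist (g a₁) (g a₂)) + ENNReal.ofReal η := ENNReal.ofReal_add_le
    _ ≤ _ := by
      rw [← edist_dist]
      gcongr
      exact Metric.edist_le_ediam_of_mem h₁ h₂

theorem obsDiam_le_obsDiamErr_add {X A B : Type*} [MetricSpace X] [MeasurableSpace X]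
    [BorelSpace X] [MetricSpace A] [MeasurableSpace A] [BorelSpace A] [MetricSpace B]
    [MeasurableSpace B] (μ : Measure X) (κ : ℝ) {g : A → B} (hg : Measurable g) {η δ : ℝ}
    (hηδ : η ≤ δ) (hd : ∀ a₁ a₂, |dist (g a₁) (g a₂) - dist a₁ a₂| ≤ η) :
    obsDiam X A μ κ ≤ obsDiamErr X B μ δ κ + ENNReal.ofReal η := by
  refine iSup₂_le fun f hf => ?_
  have hfm : Measurable f := hf.continuous.measurable
  refine (partialDiam_map_le_add_s4 μ κ hfm hg (η := η) fun a₁ a₂ => ?_).trans ?_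
  · linarith [(abs_le.1 (hd a₁ a₂)).1]
  · gcongr
    refine le_iSup₂_of_le (g ∘ f) ⟨hg.comp hfm, fun z₁ z₂ => ?_⟩ le_rfl
    have h1 := hf.dist_le_mul z₁ z₂
    rw [NNReal.coe_one, one_mul] at h1
    simp only [Function.comp_apply]
    linarith [(abs_le.1 (hd (f z₁) (f z₂))).2]

/-- If `Y_n, Z` are nonempty compact metric spaces with `d_GH(Y_n, Z) → 0`,
then for every `κ ∈ (0,1)`:
(i) `ObsDiam_Z(X;-κ) ≤ lim_{ε→0+} liminf_n ObsDiam_{Y_n}^ε(X;-κ)` (the limit in `ε` being the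
infimum over `ε > 0` by monotonicity), and
(ii) `ObsDiam_Z^+(X;-κ) ≥ limsup_n ObsDiam_{Y_n}(X;-κ)`. -/
theorem obsDiam_liminf_limsup_of_ghDist_tendsto
    {X : Type*} [MetricSpace X] [CompleteSpace X] [TopologicalSpace.SeparableSpace X]
    [MeasurableSpace X] [BorelSpace X] (μ : Measure X) [IsProbabilityMeasure μ]
    [μ.IsOpenPosMeasure]
    (Y : ℕ → Type*) [∀ n, MetricSpace (Y n)] [∀ n, MeasurableSpace (Y n)]
    [∀ n, BorelSpace (Y n)] [∀ n, CompactSpace (Y n)] [∀ n, Nonempty (Y n)]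
    (Z : Type*) [MetricSpace Z] [MeasurableSpace Z] [BorelSpace Z]
    [CompactSpace Z] [Nonempty Z]
    (hGH : Tendsto (fun n => GromovHausdorff.ghDist (Y n) Z) atTop (nhds 0)) :
    ∀ κ ∈ Set.Ioo (0 : ℝ) 1,
      obsDiam X Z μ κ ≤
        (⨅ (ε : ℝ) (_ : 0 < ε), liminf (fun n => obsDiamErr X (Y n) μ ε κ) atTop) ∧
      limsup (fun n => obsDiam X (Y n) μ κ) atTop ≤ obsDiamPlus X Z μ κ := by
  intro κ _
  have hev : ∀ η : ℝ, 0 < η → ∀ᶠ n in atTop, GromovHausdorff.ghDist (Y n) Z < η / 4 :=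
    fun η hη => hGH.eventually_lt_const (by positivity)
  -- An additional error `η ≤ δ` is absorbed by `δ`; the slack `ofReal η ≤ t` disappears as `t → 0`.
  constructor
  · refine le_iInf₂ fun δ hδ => ENNReal.le_of_forall_pos_le_add fun t ht _ => ?_
    have hη : 0 < min δ (t : ℝ) := lt_min hδ ht
    rw [← tsub_le_iff_right]
    refine le_liminf_of_le (by isBoundedDefault) ((hev _ hη).mono fun n hn => ?_)
    obtain ⟨g, hg, hd⟩ := exists_measurable_of_ghDist_lt' hn
    rw [mul_div_cancel₀ _ (four_ne_zero)] at hd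
    rw [tsub_le_iff_right]
    refine (obsDiam_le_obsDiamErr_add μ κ hg (min_le_left δ t) hd).trans ?_
    gcongr
    exact ENNReal.ofReal_le_of_le_toReal (min_le_right _ _)
  · refine le_iInf₂ fun δ hδ => ENNReal.le_of_forall_pos_le_add fun t ht _ => ?_
    have hη : 0 < min δ (t : ℝ) := lt_min hδ ht
    refine limsup_le_of_le (by isBoundedDefault) ((hev _ hη).mono fun n hn => ?_)
    obtain ⟨g, hg, hd⟩ := exists_measurable_of_ghDist_lt hn
    rw [mul_div_cancel₀ _ (four_ne_zero)] at hd
    refine (obsDiam_le_obsDiamErr_add μ κ hg (min_le_left δ t) hd).trans ?_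
    gcongr
    exact ENNReal.ofReal_le_of_le_toReal (min_le_right _ _)

end
end

section
/- Let X_n, X be mm spaces and Y a metric space. Assume X_n converges to X in the box topology; concretely, assume there exist positive numbers ε_n ↓ 0, ε_n-mm isomorphisms f_n : X_n → X, and ε_n-mm isomorphisms g_n : X → X_n. Then for every κ ∈ (0,1): (i) ObsDiam_Y(X;−κ) ≤ lim_{ε→0+} liminf_{n→∞} t-ObsDiam_Y^ε(X_n;−κ), and (ii) t-ObsDiam_Y^+(X;−κ) ≥ lim_{ε→0+} limsup_{n→∞} ObsDiam_Y(X_n;−(κ+ε)), where the limits in ε exist by monotonicity in ε. -/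
/-!
Compose 1-Lipschitz observables with the `ε n`-mm isomorphisms. If `φ` is 1-Lipschitz and `h` is an
`ε`-mm isomorphism, then `φ ∘ h` is almost 1-Lipschitz with error `ε`
(`comp_mem_almostLipErr`), and its law is within `ε` of that of `φ` in the Prokhorov sense
(`measure_preimage_le_of_isMMIso`). A set `A` of mass at least `1 - κ` for the law of `φ ∘ h`
therefore has, for every `r > ε`, an `r`-thickening of mass at least `1 - κ - r` for the law of `φ`,
at the price of `2 * r` in diameter.

For the upper bound on `ObsDiam_Y(X_n; -(κ + ε'))` the loss of mass is absorbed by `ε'`. For the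
lower semicontinuity statement the level `κ` is the same on both sides, so the lost mass has to be
recovered in the limit. This is `partialDiam_le_of_ultrafilter`: given sets `A n ⊆ Y` of diameter
at most `D` whose preimages have mass at least `1 - κ - o(1)`, partition the separable space `X`
into countably many small Borel cells, and keep the cells met by the preimage of `A n` for
ultrafilter-many `n`. Any two kept cells are met by a common `A n`, so the image of their union has
diameter at most `D` plus a small error, and dominated convergence for the series of cell masses
shows that the union has mass at least `1 - κ`.
-/


open MeasureTheory Metric Filter Set Topology ENNReal NNReal

noncomputable section

theorem partialDiam_le_of_set {Z : Type*} [MetricSpace Z] [MeasurableSpace Z] {μ : Measure Z}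
    {κ : ℝ} {D : ℝ≥0∞} {A : Set Z} (hA : MeasurableSet A) (hm : ENNReal.ofReal (1 - κ) ≤ μ A)
    (hd : ediam A ≤ D) : partialDiam μ κ ≤ D :=
  iInf_le_of_le A <| iInf₂_le_of_le hA hm hd

theorem exists_set_of_partialDiam_lt {Z : Type*} [MetricSpace Z] [MeasurableSpace Z]
    {μ : Measure Z} {κ : ℝ} {D : ℝ≥0∞} (h : partialDiam μ κ < D) :
    ∃ A : Set Z, MeasurableSet A ∧ ENNReal.ofReal (1 - κ) ≤ μ A ∧ ediam A < D := by
  simp only [partialDiam, iInf_lt_iff] at h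
  obtain ⟨A, hA, hm, hd⟩ := h
  exact ⟨A, hA, hm, hd⟩

/-- The defining inequality of the Prokhorov distance holds at every radius beyond the distance,
and, the measures having equal mass, also with the two measures interchanged. -/
theorem measure_le_thickening_of_prokhorovDist_lt {Z : Type*} [MetricSpace Z] [MeasurableSpace Z]
    [BorelSpace Z] {μ ν : Measure Z} [IsProbabilityMeasure μ] [IsProbabilityMeasure ν] {r : ℝ}
    (h : prokhorovDist μ ν < r) {A : Set Z} (hA : MeasurableSet A) :
    μ A ≤ ν (thickening r A) + ENNReal.ofReal r := by
  -- The radius `1` is admissible, so the infimum is not the junk value of an empty set.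
  have hne : {ε : ℝ | 0 < ε ∧ ∀ A : Set Z, MeasurableSet A →
      ν A ≤ μ (Metric.thickening ε A) + ENNReal.ofReal ε}.Nonempty :=
    ⟨1, one_pos, fun B _ => by simpa using prob_le_one.trans le_add_self⟩
  obtain ⟨s, ⟨-, hs⟩, hsr⟩ := exists_lt_of_csInf_lt hne h
  have hopen : MeasurableSet (thickening r A) := isOpen_thickening.measurableSet
  have h1 := hs _ hopen.compl
  -- A point within `s < r` of the complement of the `r`-thickening cannot lie in `A`.
  have hsub : thickening s (thickening r A)ᶜ ⊆ Aᶜ := by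
    intro x hx hxA
    obtain ⟨y, hy, hxy⟩ := mem_thickening_iff.1 hx
    exact hy (mem_thickening_iff.2 ⟨x, hxA, by rw [dist_comm]; exact hxy.trans hsr⟩)
  have h2 : ν (thickening r A)ᶜ ≤ μ Aᶜ + ENNReal.ofReal r :=
    h1.trans (add_le_add (measure_mono hsub) (ENNReal.ofReal_le_ofReal hsr.le))
  calc μ A ≤ μ A + 0 := by simp
    _ ≤ ν (thickening r A) + ENNReal.ofReal r := by
      have e1 : ν (thickening r A) + ν (thickening r A)ᶜ = 1 := prob_add_prob_compl hopen
      have e2 : μ A + μ Aᶜ = 1 := prob_add_prob_compl hA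
      have : μ A + μ Aᶜ ≤ (ν (thickening r A) + ENNReal.ofReal r) + μ Aᶜ := by
        rw [e2, ← e1, add_assoc, add_comm (ENNReal.ofReal r)]
        gcongr
      simpa using (ENNReal.add_le_add_iff_right (measure_ne_top μ Aᶜ)).1 this

/-- Transporting mass through an `ε`-mm isomorphism `h` and then observing through a 1-Lipschitz
map `φ` changes the law of the observation by at most `ε` in the Prokhorov sense. -/
theorem measure_preimage_le_of_isMMIso {W Z Y : Type*} [MetricSpace W] [MeasurableSpace W]
    [MetricSpace Z] [MeasurableSpace Z] [BorelSpace Z]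
    [MetricSpace Y] [MeasurableSpace Y] [BorelSpace Y]
    {P : Measure W} [IsProbabilityMeasure P] {ν : Measure Z} [IsProbabilityMeasure ν]
    {ε r : ℝ} (hr : ε < r) {h : W → Z} (hh : IsMMIso P ν ε h)
    {φ : Z → Y} (hφ : LipschitzWith 1 φ) {A : Set Y} (hA : MeasurableSet A) :
    P.map (φ ∘ h) A ≤ ν.map φ (thickening r A) + ENNReal.ofReal r := by
  have hφm : Measurable φ := hφ.continuous.measurable
  have : IsProbabilityMeasure (P.map h) := Measure.isProbabilityMeasure_map hh.1.aemeasurable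
  have h1 := measure_le_thickening_of_prokhorovDist_lt (hh.2.2.trans_lt hr) (hφm hA)
  rw [Measure.map_apply hh.1 (hφm hA)] at h1
  rw [Measure.map_apply (hφm.comp hh.1) hA,
    Measure.map_apply hφm isOpen_thickening.measurableSet]
  refine h1.trans (add_le_add (measure_mono fun x hx => ?_) le_rfl)
  obtain ⟨y, hy, hxy⟩ := mem_thickening_iff.1 hx
  refine mem_thickening_iff.2 ⟨φ y, hy, lt_of_le_of_lt ?_ hxy⟩
  simpa using hφ.dist_le_mul x y

theorem comp_mem_almostLipErr {W Z Y : Type*} [MetricSpace W] [MeasurableSpace W]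
    [MetricSpace Z] [MeasurableSpace Z] [BorelSpace Z]
    [MetricSpace Y] [MeasurableSpace Y] [BorelSpace Y]
    {P : Measure W} {ν : Measure Z} {ε δ : ℝ} (hδ : ε ≤ δ) {h : W → Z} (hh : IsMMIso P ν ε h)
    {φ : Z → Y} (hφ : LipschitzWith 1 φ) : φ ∘ h ∈ almostLipErr W Y P δ := by
  obtain ⟨hm, ⟨W', hW', hPW, hd⟩, -⟩ := hh
  refine ⟨hφ.continuous.measurable.comp hm, W', hW',
    (ENNReal.ofReal_le_ofReal (by linarith)).trans hPW, fun z₁ h₁ z₂ h₂ => ?_⟩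
  have h3 := (abs_le.1 (hd z₁ h₁ z₂ h₂)).1
  have h4 : dist (φ (h z₁)) (φ (h z₂)) ≤ dist (h z₁) (h z₂) := by
    simpa using hφ.dist_le_mul (h z₁) (h z₂)
  simp only [Function.comp_apply]
  linarith

theorem exists_countable_partition {X : Type*} [MetricSpace X]
    [TopologicalSpace.SeparableSpace X] [MeasurableSpace X] [BorelSpace X] [Nonempty X]
    {η : ℝ≥0} (hη : 0 < η) :
    ∃ C : ℕ → Set X, (∀ i, MeasurableSet (C i)) ∧ Pairwise (Function.onFun Disjoint C) ∧
      (⋃ i, C i) = univ ∧ ∀ i, ediam (C i) ≤ 2 * η := by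
  let B : ℕ → Set X := fun i => eball (TopologicalSpace.denseSeq X i) η
  refine ⟨disjointed B, fun i => MeasurableSet.disjointed (fun j => isOpen_eball.measurableSet) i,
    disjoint_disjointed B, ?_, fun i => ?_⟩
  · rw [iUnion_disjointed, eq_univ_iff_forall]
    intro x
    obtain ⟨y, ⟨i, rfl⟩, hy⟩ := EMetric.mem_closure_iff.1
      (TopologicalSpace.denseRange_denseSeq X x) η (by exact_mod_cast hη)
    exact mem_iUnion.2 ⟨i, hy⟩
  · exact (ediam_mono (disjointed_subset B i)).trans ediam_eball_le

/-- Along an ultrafilter, the mass of a union of cells of a countable partition converges: the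
index sets converge pointwise, and the masses of the cells form a summable majorant. -/
theorem tendsto_measureReal_biUnion {X : Type*} [MeasurableSpace X] {μ : Measure X}
    [IsProbabilityMeasure μ] {C : ℕ → Set X} (hC : ∀ i, MeasurableSet (C i))
    (hdisj : Pairwise (Function.onFun Disjoint C)) {ι : Type*} (U : Ultrafilter ι)
    (S : ι → Set ℕ) :
    Tendsto (fun n => μ.real (⋃ i ∈ S n, C i)) U
      (𝓝 (μ.real (⋃ i ∈ {i | ∀ᶠ n in U, i ∈ S n}, C i))) := by
  classical
  have key : ∀ T : Set ℕ, μ.real (⋃ i ∈ T, C i) = ∑' i, T.indicator (fun i => μ.real (C i)) i := by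
    intro T
    rw [Measure.real, measure_biUnion T.to_countable (fun i _ j _ hij => hdisj hij)
      (fun i _ => hC i), ENNReal.tsum_toReal_eq (fun _ => measure_ne_top _ _)]
    exact tsum_subtype T (fun i => μ.real (C i))
  have hsum : Summable fun i => μ.real (C i) := by
    refine ENNReal.summable_toReal ?_
    rw [← measure_iUnion hdisj hC]
    exact measure_ne_top _ _
  simp only [key]
  refine tendsto_tsum_of_dominated_convergence hsum (fun i => ?_)
    (Eventually.of_forall fun n i => ?_)
  · by_cases hi : ∀ᶠ n in U, i ∈ S n
    · refine tendsto_const_nhds.congr' (hi.mono fun n hn => ?_)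
      simp only [indicator_of_mem hn,
        indicator_of_mem (show i ∈ {i | ∀ᶠ n in U, i ∈ S n} from hi)]
    · refine tendsto_const_nhds.congr' ((Ultrafilter.eventually_not.2 hi).mono fun n hn => ?_)
      simp only [indicator_of_notMem hn,
        indicator_of_notMem (show i ∉ {i | ∀ᶠ n in U, i ∈ S n} from hi)]
  · refine (norm_indicator_le_norm_self _ _).trans (Real.norm_of_nonneg measureReal_nonneg).le

/-- Right-continuity of the partial diameter in `κ`: if the law of `φ` gives sets `A n` of diameter
at most `D` a mass that is asymptotically at least `1 - κ`, then the partial diameter at the level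
`1 - κ` itself is at most `D`. For each `η > 0` the competitor of diameter at most `D + η` is the
closed image of the cells of a fine partition that meet `φ ⁻¹' A n` for ultrafilter-many `n`. -/
theorem partialDiam_le_of_ultrafilter {X Y : Type*} [MetricSpace X]
    [TopologicalSpace.SeparableSpace X] [MeasurableSpace X] [BorelSpace X]
    [MetricSpace Y] [MeasurableSpace Y] [BorelSpace Y]
    {μ : Measure X} [IsProbabilityMeasure μ] {φ : X → Y} (hφ : LipschitzWith 1 φ) {κ : ℝ}
    {D : ℝ≥0∞} {ι : Type*} (U : Ultrafilter ι) (A : ι → Set Y) (r : ι → ℝ)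
    (hr : Tendsto r U (𝓝 0)) (hr0 : ∀ n, 0 ≤ r n)
    (hA : ∀ᶠ n in U, ediam (A n) ≤ D ∧
      ENNReal.ofReal (1 - κ) ≤ μ (φ ⁻¹' A n) + ENNReal.ofReal (r n)) :
    partialDiam (μ.map φ) κ ≤ D := by
  refine ENNReal.le_of_forall_pos_le_add fun η hη _ => ?_
  have : Nonempty X := nonempty_of_isProbabilityMeasure μ
  obtain ⟨C, hC, hdisj, hcov, hdiam⟩ :=
    exists_countable_partition (X := X) (η := η / 4) (by positivity)
  have hφm : Measurable φ := hφ.continuous.measurable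
  let S : ι → Set ℕ := fun n => {i | (φ ⁻¹' A n ∩ C i).Nonempty}
  let T : Set ℕ := {i | ∀ᶠ n in U, i ∈ S n}
  let E : Set X := ⋃ i ∈ T, C i
  have hcover : ∀ n, φ ⁻¹' A n ⊆ ⋃ i ∈ S n, C i := by
    intro n x hx
    obtain ⟨i, hi⟩ := mem_iUnion.1 (hcov ▸ mem_univ x)
    exact mem_biUnion (show i ∈ S n from ⟨x, hx, hi⟩) hi
  have hlim := (tendsto_measureReal_biUnion (μ := μ) hC hdisj U S).add hr
  rw [add_zero] at hlim
  have hmass : 1 - κ ≤ μ.real E := by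
    refine ge_of_tendsto hlim (hA.mono fun n hn => ?_)
    have h1 : ENNReal.ofReal (1 - κ) ≤ ENNReal.ofReal (μ.real (⋃ i ∈ S n, C i) + r n) := by
      rw [ENNReal.ofReal_add measureReal_nonneg (hr0 n), ofReal_measureReal (measure_ne_top _ _)]
      exact hn.2.trans (add_le_add (measure_mono (hcover n)) le_rfl)
    exact (ENNReal.ofReal_le_ofReal_iff (add_nonneg measureReal_nonneg (hr0 n))).1 h1
  refine partialDiam_le_of_set (A := closure (φ '' E)) isClosed_closure.measurableSet ?_ ?_
  · rw [Measure.map_apply hφm isClosed_closure.measurableSet]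
    refine (ENNReal.ofReal_le_ofReal hmass).trans ?_
    rw [ofReal_measureReal (measure_ne_top _ _)]
    exact measure_mono fun x hx => subset_closure (mem_image_of_mem φ hx)
  · rw [ediam_closure]
    refine ediam_le ?_
    rintro _ ⟨x, hx, rfl⟩ _ ⟨y, hy, rfl⟩
    obtain ⟨i, hi, hxi⟩ := mem_iUnion₂.1 hx
    obtain ⟨j, hj, hyj⟩ := mem_iUnion₂.1 hy
    -- Two selected cells are met simultaneously by `A n` for some `n`.
    obtain ⟨n, ⟨hin, hjn⟩, hAn, -⟩ := (((show ∀ᶠ n in U, i ∈ S n from hi).and hj).and hA).exists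
    obtain ⟨x', hx'A, hx'⟩ := hin
    obtain ⟨y', hy'A, hy'⟩ := hjn
    have hlip : ∀ a b, edist (φ a) (φ b) ≤ edist a b := fun a b => by simpa using hφ a b
    have e1 : edist (φ x) (φ x') ≤ 2 * (η / 4 : ℝ≥0) :=
      (hlip _ _).trans ((edist_le_ediam_of_mem hxi hx').trans (hdiam i))
    have e2 : edist (φ y') (φ y) ≤ 2 * (η / 4 : ℝ≥0) :=
      (hlip _ _).trans ((edist_le_ediam_of_mem hy' hyj).trans (hdiam j))
    have e3 : edist (φ x') (φ y') ≤ D := 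
      (edist_le_ediam_of_mem (mem_preimage.1 hx'A) (mem_preimage.1 hy'A)).trans hAn
    have e4 : (η : ℝ≥0∞) = 2 * (η / 4 : ℝ≥0) + 2 * (η / 4 : ℝ≥0) := by
      norm_cast
      ring
    calc edist (φ x) (φ y) ≤ edist (φ x) (φ x') + edist (φ x') (φ y') + edist (φ y') (φ y) :=
          edist_triangle4 _ _ _ _
      _ ≤ 2 * (η / 4 : ℝ≥0) + D + 2 * (η / 4 : ℝ≥0) := by gcongr
      _ = D + η := by rw [e4]; ring

theorem ediam_thickening_le_ofReal {Y : Type*} [MetricSpace Y] {r : ℝ} (hr : 0 ≤ r) (A : Set Y) :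
    ediam (thickening r A) ≤ ediam A + 2 * ENNReal.ofReal r := by
  lift r to ℝ≥0 using hr
  simpa using ediam_thickening_le (s := A) r

/-- If `X_n → X` in the box topology (witnessed by `ε_n ↓ 0` and `ε_n`-mm
isomorphisms in both directions), then for every `κ ∈ (0,1)`:
(i) `ObsDiam_Y(X;-κ) ≤ lim_{ε→0+} liminf_n t-ObsDiam_Y^ε(X_n;-κ)`, and
(ii) `t-ObsDiam_Y^+(X;-κ) ≥ lim_{ε→0+} limsup_n ObsDiam_Y(X_n;-(κ+ε))`,
the limits in `ε` being the infimum resp. supremum over `ε > 0` by monotonicity. -/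
theorem obsDiam_box_convergence
    (Xn : ℕ → Type*) [∀ n, MetricSpace (Xn n)] [∀ n, CompleteSpace (Xn n)]
    [∀ n, TopologicalSpace.SeparableSpace (Xn n)] [∀ n, MeasurableSpace (Xn n)]
    [∀ n, BorelSpace (Xn n)] (μn : ∀ n, Measure (Xn n)) [∀ n, IsProbabilityMeasure (μn n)]
    [∀ n, (μn n).IsOpenPosMeasure]
    {X : Type*} [MetricSpace X] [CompleteSpace X] [TopologicalSpace.SeparableSpace X]
    [MeasurableSpace X] [BorelSpace X] (μ : Measure X) [IsProbabilityMeasure μ]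
    [μ.IsOpenPosMeasure]
    (Y : Type*) [MetricSpace Y] [MeasurableSpace Y] [BorelSpace Y]
    (ε : ℕ → ℝ) (hεpos : ∀ n, 0 < ε n) (hεanti : Antitone ε)
    (hεlim : Tendsto ε atTop (nhds 0))
    (f : ∀ n, Xn n → X) (hf : ∀ n, IsMMIso (μn n) μ (ε n) (f n))
    (g : ∀ n, X → Xn n) (hg : ∀ n, IsMMIso μ (μn n) (ε n) (g n)) :
    ∀ κ ∈ Set.Ioo (0 : ℝ) 1,
      obsDiam X Y μ κ ≤
        (⨅ (ε' : ℝ) (_ : 0 < ε'), liminf (fun n => tObsDiamErr (Xn n) Y (μn n) ε' κ) atTop) ∧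
      (⨆ (ε' : ℝ) (_ : 0 < ε'), limsup (fun n => obsDiam (Xn n) Y (μn n) (κ + ε')) atTop) ≤
        tObsDiamPlus X Y μ κ := by
  intro κ _
  have hr0 : ∀ n, 0 ≤ 2 * ε n := fun n => by linarith [hεpos n]
  have hεr : ∀ n, ε n < 2 * ε n := fun n => by linarith [hεpos n]
  have hrlim : Tendsto (fun n => 2 * ε n) atTop (𝓝 0) := by simpa using hεlim.const_mul 2
  -- Enlarging sets by the radius `2 * ε n` costs less than `η` in diameter for large `n`.
  have hcost : ∀ η : ℝ≥0, 0 < η → ∀ᶠ n in atTop, 2 * ENNReal.ofReal (2 * ε n) < η := by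
    intro η hη
    have : Tendsto (fun n => 2 * ENNReal.ofReal (2 * ε n)) atTop (𝓝 0) := by
      simpa using ENNReal.Tendsto.const_mul (ENNReal.tendsto_ofReal hrlim)
        (Or.inr (by simp : (2 : ℝ≥0∞) ≠ ∞))
    exact this.eventually (gt_mem_nhds (by exact_mod_cast hη))
  constructor
  · refine iSup₂_le fun φ hφ => le_iInf₂ fun δ hδ => ?_
    have hδ' : ∀ᶠ n in atTop, ε n ≤ δ := (hεlim.eventually (gt_mem_nhds hδ)).mono fun _ h => h.le
    have hmono : liminf (fun n => partialDiam ((μn n).map (φ ∘ f n)) κ) atTop ≤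
        liminf (fun n => tObsDiamErr (Xn n) Y (μn n) δ κ) atTop :=
      liminf_le_liminf (hδ'.mono fun n hn =>
        le_iSup₂_of_le (φ ∘ f n) (comp_mem_almostLipErr hn (hf n) hφ) le_rfl)
    refine le_trans (le_of_forall_gt_imp_ge_of_dense fun D hD => ?_) hmono
    refine ENNReal.le_of_forall_pos_le_add fun η hη _ => ?_
    have hfreq := frequently_lt_of_liminf_lt (by isBoundedDefault) hD
    -- An ultrafilter concentrated on indices at which the partial diameter is below `D`.
    let F : Filter ℕ := atTop ⊓ 𝓟 {n | partialDiam ((μn n).map (φ ∘ f n)) κ < D}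
    have : F.NeBot := frequently_iff_neBot.1 hfreq
    let U : Ultrafilter ℕ := Ultrafilter.of F
    have hUtop : (U : Filter ℕ) ≤ atTop := (Ultrafilter.of_le F).trans inf_le_left
    have hUD : ∀ᶠ n in (U : Filter ℕ), partialDiam ((μn n).map (φ ∘ f n)) κ < D :=
      Filter.le_principal_iff.1 ((Ultrafilter.of_le F).trans inf_le_right)
    have hex : ∀ n, ∃ A : Set Y, partialDiam ((μn n).map (φ ∘ f n)) κ < D →
        MeasurableSet A ∧ ENNReal.ofReal (1 - κ) ≤ (μn n).map (φ ∘ f n) A ∧ ediam A < D := by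
      intro n
      by_cases h : partialDiam ((μn n).map (φ ∘ f n)) κ < D
      · obtain ⟨A, hA⟩ := exists_set_of_partialDiam_lt h
        exact ⟨A, fun _ => hA⟩
      · exact ⟨∅, fun h' => absurd h' h⟩
    choose A hA using hex
    refine partialDiam_le_of_ultrafilter hφ U (fun n => thickening (2 * ε n) (A n))
      (fun n => 2 * ε n) (hrlim.mono_left hUtop) hr0 ?_
    filter_upwards [hUD, hUtop (hcost η hη)] with n hn hcn
    obtain ⟨hAm, hmass, hdiam⟩ := hA n hn
    refine ⟨(ediam_thickening_le_ofReal (hr0 n) _).trans (add_le_add hdiam.le (le_of_lt hcn)), ?_⟩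
    have := measure_preimage_le_of_isMMIso (hεr n) (hf n) hφ hAm
    rw [Measure.map_apply hφ.continuous.measurable isOpen_thickening.measurableSet] at this
    exact hmass.trans this
  · refine iSup₂_le fun ε' hε' => le_iInf₂ fun δ hδ => ?_
    refine ENNReal.le_of_forall_pos_le_add fun η hη hfin => ?_
    have hδ' : ∀ᶠ n in atTop, ε n ≤ δ := (hεlim.eventually (gt_mem_nhds hδ)).mono fun _ h => h.le
    have hε'' : ∀ᶠ n in atTop, 2 * ε n < ε' := hrlim.eventually (gt_mem_nhds hε')
    refine limsup_le_of_le (by isBoundedDefault) ?_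
    filter_upwards [hδ', hε'', hcost (η / 2) (by positivity)] with n hn hn' hcn
    refine iSup₂_le fun ψ hψ => ?_
    have hT : partialDiam (μ.map (ψ ∘ g n)) κ ≤ tObsDiamErr X Y μ δ κ :=
      le_iSup₂_of_le (f := fun (h : X → Y) (_ : h ∈ almostLipErr X Y μ δ) =>
        partialDiam (μ.map h) κ) (ψ ∘ g n) (comp_mem_almostLipErr hn (hg n) hψ) le_rfl
    have hlt : partialDiam (μ.map (ψ ∘ g n)) κ < tObsDiamErr X Y μ δ κ + (η / 2 : ℝ≥0) :=
      hT.trans_lt (ENNReal.lt_add_right hfin.ne (by simpa using hη.ne'))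
    obtain ⟨A, hAm, hmass, hdiam⟩ := exists_set_of_partialDiam_lt hlt
    refine partialDiam_le_of_set (A := thickening (2 * ε n) A)
      isOpen_thickening.measurableSet ?_ ?_
    · have h1 := hmass.trans (measure_preimage_le_of_isMMIso (hεr n) (hg n) hψ hAm)
      calc ENNReal.ofReal (1 - (κ + ε')) ≤ ENNReal.ofReal (1 - κ - 2 * ε n) :=
            ENNReal.ofReal_le_ofReal (by linarith)
        _ = ENNReal.ofReal (1 - κ) - ENNReal.ofReal (2 * ε n) := ENNReal.ofReal_sub _ (hr0 n)
        _ ≤ _ := tsub_le_iff_right.2 h1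
    · refine (ediam_thickening_le_ofReal (hr0 n) _).trans ((add_le_add hdiam.le hcn.le).trans ?_)
      rw [add_assoc, ← ENNReal.coe_add, add_halves]

end
end

section
/- Let X_n, X be compact mm spaces and Y a metric space. Assume X_n converges to X in the measured Gromov–Hausdorff sense; concretely, assume there exist positive numbers ε_n ↓ 0, ε_n-approximation maps f_n : X_n → X with (f_n)_♯μ_{X_n} → μ_X weakly, and ε_n-approximation maps g_n : X → X_n with d_P((g_n)_♯μ_X, μ_{X_n}) ≤ ε_n. Then for every κ ∈ (0,1): (i) ObsDiam_Y(X;−κ) ≤ lim_{ε→0+} liminf_{n→∞} ObsDiam_Y^ε(X_n;−κ), and (ii) ObsDiam_Y^+(X;−κ) ≥ lim_{ε→0+} limsup_{n→∞} ObsDiam_Y(X_n;−(κ+ε)), where the limits in ε exist by monotonicity in ε. -/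
/-!
Both inequalities come from transporting test maps along the approximation maps.

*Lower bound.* If `F : X → Y` is 1-Lipschitz, then `F ∘ f n` is 1-Lipschitz with error `ε n`. The
measures `(f n)_♯ μ_n` converge weakly to `μ`, so it suffices that the partial diameter of
`F_♯ ν` is lower semicontinuous in `ν` for a fixed `κ < 1`
(`partialDiam_map_le_liminf`). This is where compactness of `X` enters: the closures of the
preimages of nearly optimal sets have a Hausdorff-convergent subsequence, and the limit `K`
satisfies `ν K ≥ 1 - κ`, because every closed thickening of `K` contains infinitely many of the
approximating sets and the portmanteau theorem applies to it.

*Upper bound.* If `h : X_n → Y` is 1-Lipschitz, then `h ∘ g n` is 1-Lipschitz with error `ε n`. A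
set `A ⊆ Y` carrying mass `1 - κ` of `(h ∘ g n)_♯ μ` becomes, after thickening by `η` slightly
larger than the Prokhorov distance, a set carrying mass `1 - κ - η` of `h_♯ μ_n`, and its diameter
grows by at most `2 η` (`partialDiam_map_le_add`).
-/

open MeasureTheory Metric Filter Set Topology ENNReal NNReal

noncomputable section

theorem partialDiam_le_of_measurableSet {Z : Type*} [MetricSpace Z] [MeasurableSpace Z]
    {μ : Measure Z} {κ : ℝ} {A : Set Z} (hA : MeasurableSet A)
    (h : ENNReal.ofReal (1 - κ) ≤ μ A) : partialDiam μ κ ≤ Metric.ediam A :=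
  iInf_le_of_le A (iInf_le_of_le hA (iInf_le_of_le h le_rfl))

theorem exists_of_partialDiam_lt {Z : Type*} [MetricSpace Z] [MeasurableSpace Z]
    {μ : Measure Z} {κ : ℝ} {D : ℝ≥0∞} (h : partialDiam μ κ < D) :
    ∃ A : Set Z, MeasurableSet A ∧ ENNReal.ofReal (1 - κ) ≤ μ A ∧ Metric.ediam A < D := by
  simp only [partialDiam, iInf_lt_iff] at h
  obtain ⟨A, hA, h1, h2⟩ := h
  exact ⟨A, hA, h1, h2⟩

/-- For a 1-Lipschitz map `F` on a compact space and a fixed `κ < 1`, the partial diameter of the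
push-forward `F_♯ ν` is lower semicontinuous in `ν` along weakly convergent sequences. -/
theorem partialDiam_map_le_liminf {X Y : Type*} [MetricSpace X] [CompactSpace X]
    [MeasurableSpace X] [BorelSpace X] [MetricSpace Y] [MeasurableSpace Y] [BorelSpace Y]
    {ν : ℕ → ProbabilityMeasure X} {μ : ProbabilityMeasure X} (hν : Tendsto ν atTop (𝓝 μ))
    {F : X → Y} (hF : LipschitzWith 1 F) {κ : ℝ} (hκ : κ < 1) :
    partialDiam ((μ : Measure X).map F) κ ≤
      liminf (fun n => partialDiam ((ν n : Measure X).map F) κ) atTop := by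
  refine le_of_forall_gt_imp_ge_of_dense fun D hD => ?_
  obtain ⟨φ, hφ, hφD⟩ := extraction_of_frequently_atTop (frequently_lt_of_liminf_lt (h := hD))
  choose A hAm hAμ hAd using fun k => exists_of_partialDiam_lt (hφD k)
  have hFm : Measurable F := hF.continuous.measurable
  have hAμ' : ∀ k, ENNReal.ofReal (1 - κ) ≤ (ν (φ k) : Measure X) (F ⁻¹' A k) := fun k => by
    rw [← Measure.map_apply hFm (hAm k)]
    exact hAμ k
  have hpos : 0 < ENNReal.ofReal (1 - κ) := ENNReal.ofReal_pos.2 (by linarith)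
  have hne : ∀ k, (closure (F ⁻¹' A k)).Nonempty := fun k =>
    (nonempty_of_measure_ne_zero (hpos.trans_le (hAμ' k)).ne').closure
  let K : ℕ → TopologicalSpace.NonemptyCompacts X := fun k =>
    ⟨⟨closure (F ⁻¹' A k), isClosed_closure.isCompact⟩, hne k⟩
  obtain ⟨L, ψ, hψ, hL⟩ := CompactSpace.tendsto_subseq K
  have hLc : IsCompact (L : Set X) := L.isCompact
  have hFK : ∀ k, Metric.ediam (F '' (K k : Set X)) ≤ D := fun k => by
    have h1 : F '' (K k : Set X) ⊆ closure (A k) :=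
      (image_closure_subset_closure_image hF.continuous).trans
        (closure_mono (image_preimage_subset _ _))
    calc _ ≤ Metric.ediam (closure (A k)) := Metric.ediam_mono h1
      _ = Metric.ediam (A k) := Metric.ediam_closure _
      _ ≤ D := (hAd k).le
  have hclose : ∀ δ : ℝ≥0, 0 < δ → ∀ᶠ k in atTop,
      hausdorffEDist (K (ψ k) : Set X) (L : Set X) < δ := fun δ hδ => by
    have := EMetric.tendsto_nhds.1 hL δ (by exact_mod_cast hδ)
    filter_upwards [this] with k hk using hk
  have hdiam : Metric.ediam (F '' (L : Set X)) ≤ D := by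
    refine ENNReal.le_of_forall_pos_le_add fun δ hδ _ => ?_
    have hδ2 : 0 < δ / 2 := by positivity
    obtain ⟨k, hk⟩ := (hclose (δ / 2) hδ2).exists
    rw [hausdorffEDist_comm] at hk
    have hsub : F '' (L : Set X) ⊆
        Metric.thickening ((δ / 2 : ℝ≥0) : ℝ) (F '' (K (ψ k) : Set X)) := by
      rintro _ ⟨x, hx, rfl⟩
      obtain ⟨y, hy, hxy⟩ := exists_edist_lt_of_hausdorffEDist_lt hx hk
      refine Metric.mem_thickening_iff.2 ⟨F y, mem_image_of_mem _ hy, ?_⟩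
      refine (hF.dist_le_mul x y).trans_lt ?_
      rw [NNReal.coe_one, one_mul]
      exact edist_lt_coe.1 hxy
    calc _ ≤ _ := Metric.ediam_mono hsub
      _ ≤ _ := Metric.ediam_thickening_le _
      _ ≤ D + 2 * ((δ / 2 : ℝ≥0) : ℝ≥0∞) := by gcongr; exact hFK _
      _ = D + δ := by
        congr 1
        exact_mod_cast mul_div_cancel₀ δ (two_ne_zero)
  have hthick : ∀ δ : ℝ, 0 < δ →
      ENNReal.ofReal (1 - κ) ≤ (μ : Measure X) (Metric.cthickening δ (L : Set X)) := by
    intro δ hδ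
    lift δ to ℝ≥0 using hδ.le
    have hlim : Tendsto (fun k => ν (φ (ψ k))) atTop (𝓝 μ) :=
      hν.comp (hφ.tendsto_atTop.comp hψ.tendsto_atTop)
    refine le_trans ?_ (ProbabilityMeasure.limsup_measure_closed_le_of_tendsto hlim
      (Metric.isClosed_cthickening (δ := (δ : ℝ)) (E := (L : Set X))))
    refine le_limsup_of_frequently_le (Eventually.frequently ?_)
    filter_upwards [hclose δ (by exact_mod_cast hδ)] with k hk
    refine (hAμ' (ψ k)).trans (measure_mono fun x hx => ?_)
    obtain ⟨y, hy, hxy⟩ := exists_edist_lt_of_hausdorffEDist_lt (subset_closure hx) hk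
    refine Metric.thickening_subset_cthickening _ _ (Metric.mem_thickening_iff.2 ⟨y, hy, ?_⟩)
    exact edist_lt_coe.1 hxy
  have hLμ : ENNReal.ofReal (1 - κ) ≤ (μ : Measure X) (L : Set X) := by
    have ht := (tendsto_measure_cthickening_of_isCompact (μ := (μ : Measure X)) hLc).mono_left
      (nhdsWithin_le_nhds (s := Ioi (0 : ℝ)))
    refine ge_of_tendsto ht ?_
    filter_upwards [self_mem_nhdsWithin] with δ hδ using hthick δ hδ
  have hFL : MeasurableSet (F '' (L : Set X)) := (hLc.image hF.continuous).measurableSet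
  refine (partialDiam_le_of_measurableSet hFL ?_).trans hdiam
  rw [Measure.map_apply hFm hFL]
  exact hLμ.trans (measure_mono (subset_preimage_image _ _))

/-- For probability measures the infimum defining the Prokhorov distance runs over a nonempty set,
and its one-sided condition is symmetric: applying it to the complement of a thickening
exchanges the two measures. -/
theorem exists_thickening_le_of_prokhorovDist_lt {Z : Type*} [MetricSpace Z] [MeasurableSpace Z]
    [BorelSpace Z] {μ ν : Measure Z} [IsProbabilityMeasure μ] [IsProbabilityMeasure ν] {c : ℝ}
    (h : prokhorovDist μ ν < c) :
    ∃ η : ℝ, 0 < η ∧ η < c ∧ ∀ B : Set Z, MeasurableSet B →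
      μ B ≤ ν (Metric.thickening η B) + ENNReal.ofReal η := by
  have hne : {ε : ℝ | 0 < ε ∧ ∀ A : Set Z, MeasurableSet A →
      ν A ≤ μ (Metric.thickening ε A) + ENNReal.ofReal ε}.Nonempty :=
    ⟨1, one_pos, fun A _ => by simpa using prob_le_one.trans le_add_self⟩
  obtain ⟨η, ⟨hη, hA⟩, hηc⟩ := exists_lt_of_csInf_lt hne h
  refine ⟨η, hη, hηc, fun B hB => ?_⟩
  set T := Metric.thickening η B with hT
  have hTm : MeasurableSet T := Metric.isOpen_thickening.measurableSet
  have hsub : Metric.thickening η Tᶜ ⊆ Bᶜ := by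
    intro x hx hxB
    obtain ⟨y, hy, hxy⟩ := Metric.mem_thickening_iff.1 hx
    exact hy (Metric.mem_thickening_iff.2 ⟨x, hxB, by rwa [dist_comm]⟩)
  have h1 : ν Tᶜ ≤ μ Bᶜ + ENNReal.ofReal η :=
    (hA _ hTm.compl).trans (by gcongr)
  have h2 : μ B + μ Bᶜ ≤ ν T + ENNReal.ofReal η + μ Bᶜ :=
    calc μ B + μ Bᶜ = ν T + ν Tᶜ := by
          rw [prob_add_prob_compl hB, prob_add_prob_compl hTm]
      _ ≤ ν T + (μ Bᶜ + ENNReal.ofReal η) := by gcongr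
      _ = _ := by ring
  exact (ENNReal.add_le_add_iff_right (measure_ne_top μ _)).1 h2

/-- If `μ` and `ν` have Prokhorov distance `< c`, then the partial diameter of `F_♯ ν` exceeds that
of `F_♯ μ` by at most `2 c`, provided the mass level for `ν` is lowered by some `ε' ≥ c`. -/
theorem partialDiam_map_le_add_s6 {Z Y : Type*} [MetricSpace Z] [MeasurableSpace Z]
    [BorelSpace Z] [MetricSpace Y] [MeasurableSpace Y] [BorelSpace Y]
    {μ ν : Measure Z} [IsProbabilityMeasure μ] [IsProbabilityMeasure ν] {c ε' κ : ℝ}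
    (h : prokhorovDist μ ν < c) (hc : c ≤ ε') {F : Z → Y} (hF : LipschitzWith 1 F) :
    partialDiam (ν.map F) (κ + ε') ≤ partialDiam (μ.map F) κ + 2 * ENNReal.ofReal c := by
  have hFm : Measurable F := hF.continuous.measurable
  obtain ⟨η, hη, hηc, hB⟩ := exists_thickening_le_of_prokhorovDist_lt h
  lift η to ℝ≥0 using hη.le
  have hdiam : ∀ A : Set Y, Metric.ediam (Metric.thickening η A) ≤
      Metric.ediam A + 2 * ENNReal.ofReal c := fun A => by
    have h3 : (η : ℝ≥0∞) ≤ ENNReal.ofReal c := by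
      rw [← ENNReal.ofReal_coe_nnreal]
      exact ENNReal.ofReal_le_ofReal hηc.le
    exact (Metric.ediam_thickening_le η).trans (by gcongr)
  refine le_of_forall_gt_imp_ge_of_dense fun D hD => ?_
  obtain ⟨A, hAm, hAμ, hAd⟩ :=
    exists_of_partialDiam_lt (lt_tsub_iff_right.2 hD)
  have hTm : MeasurableSet (Metric.thickening η A) := Metric.isOpen_thickening.measurableSet
  refine (partialDiam_le_of_measurableSet hTm ?_).trans
    ((hdiam A).trans (lt_tsub_iff_right.1 hAd).le)
  rw [Measure.map_apply hFm hAm] at hAμ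
  rw [Measure.map_apply hFm hTm]
  have hsub : Metric.thickening η (F ⁻¹' A) ⊆ F ⁻¹' Metric.thickening η A := by
    intro x hx
    obtain ⟨y, hy, hxy⟩ := Metric.mem_thickening_iff.1 hx
    refine Metric.mem_thickening_iff.2 ⟨F y, hy, (hF.dist_le_mul x y).trans_lt ?_⟩
    simpa using hxy
  have h4 : ENNReal.ofReal (1 - κ) ≤ ν (F ⁻¹' Metric.thickening η A) + ENNReal.ofReal η :=
    hAμ.trans ((hB _ (hFm hAm)).trans (by gcongr))
  calc ENNReal.ofReal (1 - (κ + ε')) ≤ ENNReal.ofReal (1 - κ - η) :=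
        ENNReal.ofReal_le_ofReal (by linarith)
    _ = ENNReal.ofReal (1 - κ) - ENNReal.ofReal η := ENNReal.ofReal_sub _ hη.le
    _ ≤ _ := tsub_le_iff_right.2 h4

/-- If the compact mm spaces `X_n → X` in the measured Gromov–Hausdorff sense
(witnessed by `ε_n ↓ 0`, `ε_n`-approximation maps `f_n : X_n → X` with `(f_n)_♯μ_{X_n} → μ_X`
weakly, and `ε_n`-approximation maps `g_n : X → X_n` with `d_P((g_n)_♯μ_X, μ_{X_n}) ≤ ε_n`),
then for every `κ ∈ (0,1)`:
(i) `ObsDiam_Y(X;-κ) ≤ lim_{ε→0+} liminf_n ObsDiam_Y^ε(X_n;-κ)`, and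
(ii) `ObsDiam_Y^+(X;-κ) ≥ lim_{ε→0+} limsup_n ObsDiam_Y(X_n;-(κ+ε))`,
the limits in `ε` being the infimum resp. supremum over `ε > 0` by monotonicity. -/
theorem obsDiam_mGH_convergence
    (Xn : ℕ → Type*) [∀ n, MetricSpace (Xn n)] [∀ n, CompactSpace (Xn n)]
    [∀ n, CompleteSpace (Xn n)] [∀ n, TopologicalSpace.SeparableSpace (Xn n)]
    [∀ n, MeasurableSpace (Xn n)] [∀ n, BorelSpace (Xn n)]
    (μn : ∀ n, Measure (Xn n)) [∀ n, IsProbabilityMeasure (μn n)]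
    [∀ n, (μn n).IsOpenPosMeasure]
    {X : Type*} [MetricSpace X] [CompactSpace X] [CompleteSpace X]
    [TopologicalSpace.SeparableSpace X] [MeasurableSpace X] [BorelSpace X]
    (μ : Measure X) [IsProbabilityMeasure μ] [μ.IsOpenPosMeasure]
    (Y : Type*) [MetricSpace Y] [MeasurableSpace Y] [BorelSpace Y]
    (ε : ℕ → ℝ) (hεpos : ∀ n, 0 < ε n) (hεanti : Antitone ε)
    (hεlim : Tendsto ε atTop (nhds 0))
    (f : ∀ n, Xn n → X) (hf : ∀ n, IsApproxMap (ε n) (f n))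
    (hfweak : ∀ φ : BoundedContinuousFunction X ℝ,
      Tendsto (fun n => ∫ x, φ x ∂((μn n).map (f n))) atTop (nhds (∫ x, φ x ∂μ)))
    (g : ∀ n, X → Xn n) (hg : ∀ n, IsApproxMap (ε n) (g n))
    (hgP : ∀ n, prokhorovDist (μ.map (g n)) (μn n) ≤ ε n) :
    ∀ κ ∈ Set.Ioo (0 : ℝ) 1,
      obsDiam X Y μ κ ≤
        (⨅ (ε' : ℝ) (_ : 0 < ε'), liminf (fun n => obsDiamErr (Xn n) Y (μn n) ε' κ) atTop) ∧
      (⨆ (ε' : ℝ) (_ : 0 < ε'), limsup (fun n => obsDiam (Xn n) Y (μn n) (κ + ε')) atTop) ≤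
        obsDiamPlus X Y μ κ := by
  rintro κ ⟨-, hκ⟩
  have hmap : ∀ n, IsProbabilityMeasure ((μn n).map (f n)) := fun n =>
    Measure.isProbabilityMeasure_map (hf n).1.aemeasurable
  have hmap' : ∀ n, IsProbabilityMeasure (μ.map (g n)) := fun n =>
    Measure.isProbabilityMeasure_map (hg n).1.aemeasurable
  constructor
  · refine le_iInf₂ fun ε' hε' => iSup₂_le fun F hF => ?_
    let ν : ℕ → ProbabilityMeasure X := fun n => ⟨(μn n).map (f n), hmap n⟩
    have hν : Tendsto ν atTop (𝓝 (⟨μ, inferInstance⟩ : ProbabilityMeasure X)) :=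
      ProbabilityMeasure.tendsto_iff_forall_integral_tendsto.2 hfweak
    refine (partialDiam_map_le_liminf hν hF hκ).trans (liminf_le_liminf ?_)
    filter_upwards [hεlim.eventually_lt_const hε'] with n hn
    have hFm : Measurable F := hF.continuous.measurable
    change partialDiam (((μn n).map (f n)).map F) κ ≤ _
    rw [Measure.map_map hFm (hf n).1]
    refine le_iSup₂_of_le (F ∘ f n) ⟨hFm.comp (hf n).1, fun z₁ z₂ => ?_⟩ le_rfl
    have h1 : dist (F (f n z₁)) (F (f n z₂)) ≤ dist (f n z₁) (f n z₂) := by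
      simpa using hF.dist_le_mul (f n z₁) (f n z₂)
    have h2 := abs_lt.1 ((hf n).2.1 z₁ z₂)
    simp only [Function.comp_apply]
    linarith
  · refine iSup₂_le fun ε' hε' => le_iInf₂ fun δ hδ => ?_
    -- The factor 2 turns the bound on the Prokhorov distance into a strict one.
    have hlim : Tendsto (fun n => obsDiamErr X Y μ δ κ + 2 * ENNReal.ofReal (2 * ε n)) atTop
        (𝓝 (obsDiamErr X Y μ δ κ)) := by
      have h1 : Tendsto (fun n => 2 * ENNReal.ofReal (2 * ε n)) atTop (𝓝 0) := by
        have h2 := ENNReal.tendsto_ofReal (hεlim.const_mul 2)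
        have h3 := ENNReal.Tendsto.const_mul (a := 2) h2 (Or.inr (by simp))
        simpa using h3
      simpa using h1.const_add (obsDiamErr X Y μ δ κ)
    refine le_trans (limsup_le_limsup ?_) hlim.limsup_eq.le
    have h2lim : Tendsto (fun n => 2 * ε n) atTop (𝓝 0) := by simpa using hεlim.const_mul 2
    filter_upwards [hεlim.eventually_lt_const hδ, h2lim.eventually_lt_const hε'] with n hn hn'
    refine iSup₂_le fun h hh => ?_
    have hhm : Measurable h := hh.continuous.measurable
    have hP : prokhorovDist (μ.map (g n)) (μn n) < 2 * ε n := by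
      linarith [hgP n, hεpos n]
    refine (partialDiam_map_le_add_s6 hP hn'.le hh).trans ?_
    gcongr
    rw [Measure.map_map hhm (hg n).1]
    refine le_iSup₂_of_le (h ∘ g n) ⟨hhm.comp (hg n).1, fun z₁ z₂ => ?_⟩ le_rfl
    have h1 : dist (h (g n z₁)) (h (g n z₂)) ≤ dist (g n z₁) (g n z₂) := by
      simpa using hh.dist_le_mul (g n z₁) (g n z₂)
    have h2 := abs_lt.1 ((hg n).2.1 z₁ z₂)
    simp only [Function.comp_apply]
    linarith

end
end

section
/- Let X be an mm space and Y a metric space. Then the function κ ↦ ObsDiam_Y(X;−κ), with values in [0,∞], is right-continuous on (0,1). -/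
/-!
For a fixed 1-Lipschitz map `f`, the function `κ ↦ Diam(f_♯μ; 1-κ)` is antitone and
right-continuous; `κ ↦ ObsDiam` is a supremum of such functions, hence antitone and (by lower
semicontinuity of suprema) right-continuous as well.

For fixed `f`, let `t n ↓ κ` and let `A n ⊆ Y` have `f_♯μ`-measure at least `1 - t n` and diameter
less than `d n ↓ c`. Since `Y` need be neither complete nor separable, the sets are pulled back to
`B n = f⁻¹(A n)` in the Polish space `X`, where `μ` is inner regular for compact sets. The Kuratowski
limit `L` of the `B n` along a nonprincipal ultrafilter on `ℕ` is closed. By continuity of `f`, the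
image of `L` has diameter at most `c` (`edist_le_of_mem_kuratowskiLim`). A compact set disjoint from
`L` is disjoint from `B n` for almost all `n`, so has measure at most `κ`; hence `μ Lᶜ ≤ κ`
(`measure_compl_kuratowskiLim_le`). The closure of `f(L)` then bounds `Diam(f_♯μ; 1-κ)` by `c`.
-/

open MeasureTheory Metric Filter Set Topology ENNReal NNReal

noncomputable section

/-- The Kuratowski limit of a family of sets along a filter `F`: the points each of whose
neighbourhoods meets `B n` for `F`-almost every `n` (the lower limit). Along an ultrafilter the
lower and upper limits coincide. -/
def kuratowskiLim {ι X : Type*} [TopologicalSpace X] (F : Filter ι) (B : ι → Set X) : Set X :=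
  {x | ∀ U ∈ 𝓝 x, ∀ᶠ n in F, (U ∩ B n).Nonempty}

lemma isClosed_kuratowskiLim {ι X : Type*} [TopologicalSpace X] (F : Filter ι) (B : ι → Set X) :
    IsClosed (kuratowskiLim F B) := by
  refine isClosed_of_closure_subset fun x hx U hU => ?_
  obtain ⟨V, hVU, hVo, hxV⟩ := mem_nhds_iff.1 hU
  obtain ⟨y, hyV, hy⟩ := mem_closure_iff.1 hx V hVo hxV
  exact (hy V (hVo.mem_nhds hyV)).mono fun n hn => hn.mono (inter_subset_inter_left _ hVU)

lemma eventually_disjoint_of_isCompact {ι X : Type*} [TopologicalSpace X] (F : Ultrafilter ι)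
    (B : ι → Set X) {K : Set X} (hK : IsCompact K) (hKB : K ⊆ (kuratowskiLim F B)ᶜ) :
    ∀ᶠ n in (F : Filter ι), Disjoint K (B n) := by
  refine hK.induction_on (p := fun s => ∀ᶠ n in (F : Filter ι), Disjoint s (B n)) ?_ ?_ ?_ ?_
  · simp
  · exact fun s t hst ht => ht.mono fun n hn => hn.mono_left hst
  · intro s t hs ht
    filter_upwards [hs, ht] with n h1 h2 using h1.union_left h2
  · intro x hx
    have hxL : ¬ ∀ U ∈ 𝓝 x, ∀ᶠ n in (F : Filter ι), (U ∩ B n).Nonempty := hKB hx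
    -- For an ultrafilter, `push Not` turns `¬ ∀ᶠ n, p n` into `∀ᶠ n, ¬ p n`.
    push Not at hxL
    obtain ⟨U, hU, hn⟩ := hxL
    refine ⟨U, mem_nhdsWithin_of_mem_nhds hU, ?_⟩
    exact hn.mono fun n h => disjoint_iff_inter_eq_empty.2 h

lemma measure_compl_kuratowskiLim_le {ι X : Type*} [MetricSpace X] [CompleteSpace X]
    [TopologicalSpace.SeparableSpace X] [MeasurableSpace X] [BorelSpace X]
    (μ : Measure X) [IsProbabilityMeasure μ] (F : Ultrafilter ι) (B : ι → Set X)
    (hB : ∀ n, MeasurableSet (B n)) (t : ι → ℝ) (κ : ℝ) (ht : Tendsto t F (𝓝 κ))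
    (hμ : ∀ n, ENNReal.ofReal (1 - t n) ≤ μ (B n)) :
    μ (kuratowskiLim F B)ᶜ ≤ ENNReal.ofReal κ := by
  have : SecondCountableTopology X := UniformSpace.secondCountable_of_separable X
  have hm : MeasurableSet (kuratowskiLim (F : Filter ι) B)ᶜ :=
    (isClosed_kuratowskiLim _ _).measurableSet.compl
  rw [hm.measure_eq_iSup_isCompact]
  refine iSup₂_le fun K hKL => iSup_le fun hK => ?_
  refine ge_of_tendsto (ENNReal.tendsto_ofReal ht) ?_
  refine (eventually_disjoint_of_isCompact F B hK hKL).mono fun n hn => ?_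
  calc μ K ≤ μ (B n)ᶜ := measure_mono hn.subset_compl_right
    _ = 1 - μ (B n) := prob_compl_eq_one_sub (hB n)
    _ ≤ 1 - ENNReal.ofReal (1 - t n) := tsub_le_tsub_left (hμ n) _
    _ ≤ ENNReal.ofReal (t n) := by
      rw [tsub_le_iff_right]
      calc (1 : ℝ≥0∞) = ENNReal.ofReal (t n + (1 - t n)) := by simp
        _ ≤ _ := ENNReal.ofReal_add_le

lemma edist_le_of_mem_kuratowskiLim {ι X Y : Type*} [TopologicalSpace X] [MetricSpace Y]
    (F : Filter ι) [F.NeBot] {f : X → Y} (hf : Continuous f) (A : ι → Set Y) (d : ι → ℝ≥0∞)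
    (c : ℝ≥0∞) (hd : Tendsto d F (𝓝 c)) (hA : ∀ n, Metric.ediam (A n) ≤ d n) {x y : X}
    (hx : x ∈ kuratowskiLim F fun n => f ⁻¹' A n) (hy : y ∈ kuratowskiLim F fun n => f ⁻¹' A n) :
    edist (f x) (f y) ≤ c := by
  by_contra! h
  obtain ⟨r, hcr, hr⟩ := exists_between h
  have hcont : Continuous fun p : X × X => edist (f p.1) (f p.2) := by fun_prop
  have hmem : {p : X × X | r < edist (f p.1) (f p.2)} ∈ 𝓝 (x, y) :=
    (isOpen_lt continuous_const hcont).mem_nhds hr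
  obtain ⟨U, hU, V, hV, hUV⟩ := mem_nhds_prod_iff.1 hmem
  obtain ⟨n, ⟨a, haU, haA⟩, ⟨b, hbV, hbA⟩, hn⟩ :=
    ((hx U hU).and ((hy V hV).and (hd.eventually_lt_const hcr))).exists
  have h1 : r < edist (f a) (f b) := hUV (Set.mk_mem_prod haU hbV)
  have h2 : edist (f a) (f b) ≤ d n := (Metric.edist_le_ediam_of_mem (mem_preimage.1 haA) (mem_preimage.1 hbA)).trans (hA n)
  exact absurd (h1.trans_le h2) hn.not_gt

/-- Right-continuity of `κ ↦ Diam(f_♯μ; 1-κ)`, in the form of right lower semicontinuity. -/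
lemma partialDiam_map_le_of_forall_gt {X Y : Type*} [MetricSpace X] [CompleteSpace X]
    [TopologicalSpace.SeparableSpace X] [MeasurableSpace X] [BorelSpace X]
    (μ : Measure X) [IsProbabilityMeasure μ]
    [MetricSpace Y] [MeasurableSpace Y] [BorelSpace Y] {f : X → Y} (hf : Continuous f)
    {κ : ℝ} (hκ : 0 ≤ κ) {c : ℝ≥0∞} (h : ∀ t, κ < t → partialDiam (μ.map f) t ≤ c) :
    partialDiam (μ.map f) κ ≤ c := by
  rcases eq_or_ne c ⊤ with rfl | hc
  · exact le_top
  obtain ⟨t, -, htκ, ht⟩ := exists_seq_strictAnti_tendsto κ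
  obtain ⟨d, -, hdc, hd⟩ := exists_seq_strictAnti_tendsto' (lt_top_iff_ne_top.2 hc)
  have hex : ∀ n, ∃ A : Set Y, MeasurableSet A ∧ ENNReal.ofReal (1 - t n) ≤ μ.map f A ∧
      Metric.ediam A < d n := by
    intro n
    have := (h (t n) (htκ n)).trans_lt (hdc n).1
    simp only [partialDiam, iInf_lt_iff, exists_prop] at this
    exact this
  choose A hAm hAμ hAd using hex
  set F := hyperfilter ℕ
  have hF : (F : Filter ℕ) ≤ atTop := Nat.hyperfilter_le_atTop
  set L := kuratowskiLim (F : Filter ℕ) fun n => f ⁻¹' A n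
  have hL : μ Lᶜ ≤ ENNReal.ofReal κ :=
    measure_compl_kuratowskiLim_le μ F _ (fun n => hf.measurable (hAm n)) t κ (ht.mono_left hF)
      fun n => by simpa only [Measure.map_apply hf.measurable (hAm n)] using hAμ n
  have hdiam : Metric.ediam (closure (f '' L)) ≤ c := by
    rw [Metric.ediam_closure, Metric.ediam_image_le_iff]
    exact fun x hx y hy => edist_le_of_mem_kuratowskiLim (F : Filter ℕ) hf A d c
      (hd.mono_left hF) (fun n => (hAd n).le) hx hy
  have hmeas : ENNReal.ofReal (1 - κ) ≤ μ.map f (closure (f '' L)) := by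
    rw [Measure.map_apply hf.measurable isClosed_closure.measurableSet]
    calc ENNReal.ofReal (1 - κ) = 1 - ENNReal.ofReal κ := by
          rw [ENNReal.ofReal_sub _ hκ, ENNReal.ofReal_one]
      _ ≤ 1 - μ Lᶜ := tsub_le_tsub_left hL _
      _ = μ L := by
          rw [← prob_compl_eq_one_sub (isClosed_kuratowskiLim _ _).measurableSet.compl,
            compl_compl]
      _ ≤ _ := measure_mono fun x hx => mem_preimage.2 (subset_closure (mem_image_of_mem f hx))
  exact (iInf₂_le_of_le _ isClosed_closure.measurableSet (iInf_le _ hmeas)).trans hdiam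

lemma antitone_partialDiam {Z : Type*} [MetricSpace Z] [MeasurableSpace Z] (μ : Measure Z) :
    Antitone (partialDiam μ) := fun s t hst =>
  le_iInf₂ fun A hA => le_iInf fun h => iInf₂_le_of_le A hA <|
    iInf_le _ ((ENNReal.ofReal_le_ofReal (by linarith)).trans h)

/-- For an mm space `X` and a metric space `Y`, the `[0,∞]`-valued function
`κ ↦ ObsDiam_Y(X;-κ)` is right-continuous on `(0,1)`. -/
theorem obsDiam_rightContinuous
    {X : Type*} [MetricSpace X] [CompleteSpace X] [TopologicalSpace.SeparableSpace X]
    [MeasurableSpace X] [BorelSpace X] (μ : Measure X) [IsProbabilityMeasure μ]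
    [μ.IsOpenPosMeasure]
    (Y : Type*) [MetricSpace Y] [MeasurableSpace Y] [BorelSpace Y] :
    ∀ κ ∈ Set.Ioo (0 : ℝ) 1,
      ContinuousWithinAt (fun t : ℝ => obsDiam X Y μ t) (Set.Ici κ) κ := by
  intro κ hκ
  have anti : Antitone fun t : ℝ => obsDiam X Y μ t := fun s t hst =>
    iSup₂_mono fun f _ => antitone_partialDiam _ hst
  refine tendsto_order.2 ⟨fun a ha => ?_, fun a ha => ?_⟩
  · obtain ⟨f, hf, haf⟩ : ∃ f : X → Y, LipschitzWith 1 f ∧ a < partialDiam (μ.map f) κ := by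
      simpa only [obsDiam, lt_iSup_iff, exists_prop] using ha
    obtain ⟨t, ht, hat⟩ : ∃ t, κ < t ∧ a < partialDiam (μ.map f) t := by
      by_contra! h
      exact haf.not_ge (partialDiam_map_le_of_forall_gt μ hf.continuous hκ.1.le h)
    have hat' : a < obsDiam X Y μ t :=
      hat.trans_le (le_iSup₂ (f := fun (f : X → Y) (_ : LipschitzWith 1 f) =>
        partialDiam (μ.map f) t) f hf)
    filter_upwards [mem_nhdsWithin_of_mem_nhds (Iio_mem_nhds ht)] with s hs
    exact hat'.trans_le (anti (le_of_lt hs))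
  · filter_upwards [self_mem_nhdsWithin] with s hs
    exact (anti hs).trans_lt ha

end
end

section
/- Let X be an mm space, Y a metric space, κ ∈ (0,1), 0 < ε < κ, and δ > 0. Assume that for every f ∈ t-Lip₁^δ(X,Y) there exists g ∈ Lip₁(X,Y) with d_KF^{μ_X}(f,g) < ε. Then t-ObsDiam_Y^δ(X;−κ) ≤ ObsDiam_Y(X;−(κ−ε)) + 2ε. -/
/-!
If two maps `f`, `g` differ by more than some `r < ε` only on a set of measure at most `r`, then
every Borel set `A` carrying `g_♯μ`-mass at least `1 - (κ - ε)` can be fattened to its closed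
`r`-thickening, which carries `f_♯μ`-mass at least `1 - (κ - ε) - r ≥ 1 - κ` and whose diameter
exceeds that of `A` by at most `2 r`. Taking the infimum over `A` compares the partial diameters
of `f_♯μ` and `g_♯μ` (`partialDiam_map_le_of_kyFanDist_lt`); the theorem follows by bounding the
partial diameter of `g_♯μ` by the observable diameter and taking the supremum over `f`.
-/

open MeasureTheory Metric Filter Set Topology ENNReal NNReal

noncomputable section

/-- The set defining the Ky Fan distance contains `1`, so its infimum is not the junk value of an
empty set and can be approximated from above by admissible radii. -/
lemma exists_lt_of_kyFanDist_lt {X Y : Type*} [MeasurableSpace X] [MetricSpace Y]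
    {μ : Measure X} [IsProbabilityMeasure μ] {f g : X → Y} {ε : ℝ} (h : kyFanDist μ f g < ε) :
    ∃ r, 0 ≤ r ∧ r < ε ∧ μ {x | r < dist (f x) (g x)} ≤ ENNReal.ofReal r := by
  have hne : {r : ℝ | 0 ≤ r ∧ μ {x | r < dist (f x) (g x)} ≤ ENNReal.ofReal r}.Nonempty :=
    ⟨1, zero_le_one, by simpa using prob_le_one⟩
  obtain ⟨r, ⟨hr0, hr⟩, hrε⟩ := exists_lt_of_csInf_lt hne h
  exact ⟨r, hr0, hrε, hr⟩

/-- Stability of the partial diameter under Ky Fan perturbations. No measurability of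
`{x | r < dist (f x) (g x)}` is needed (it may fail when `Y` is not separable), since only
subadditivity of the outer measure is used. -/
lemma partialDiam_map_le_of_kyFanDist_lt {X Y : Type*} [MeasurableSpace X] [MetricSpace Y]
    [MeasurableSpace Y] [BorelSpace Y] {μ : Measure X} [IsProbabilityMeasure μ] {f g : X → Y}
    (hf : Measurable f) (hg : Measurable g) {κ ε : ℝ} (hκ : κ ≤ 1) (h : kyFanDist μ f g < ε) :
    partialDiam (μ.map f) κ ≤ partialDiam (μ.map g) (κ - ε) + ENNReal.ofReal (2 * ε) := by
  obtain ⟨r, hr0, hrε, hr⟩ := exists_lt_of_kyFanDist_lt h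
  unfold partialDiam
  simp only [ENNReal.iInf_add]
  refine le_iInf fun A => le_iInf fun hA => le_iInf fun hAκ => ?_
  have hB : MeasurableSet (cthickening r A) := isClosed_cthickening.measurableSet
  have hsub : g ⁻¹' A ⊆ f ⁻¹' cthickening r A ∪ {x | r < dist (f x) (g x)} := by
    intro x hx
    by_cases hd : r < dist (f x) (g x)
    · exact Or.inr hd
    · exact Or.inl (mem_cthickening_of_dist_le (f x) (g x) r A hx (not_lt.1 hd))
  have hmass : ENNReal.ofReal (1 - κ) ≤ μ.map f (cthickening r A) := by
    rw [Measure.map_apply hg hA] at hAκ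
    rw [Measure.map_apply hf hB]
    have hsum : ENNReal.ofReal (1 - κ) + ENNReal.ofReal r
        ≤ μ (f ⁻¹' cthickening r A) + ENNReal.ofReal r := by
      calc ENNReal.ofReal (1 - κ) + ENNReal.ofReal r
          = ENNReal.ofReal (1 - κ + r) := (ENNReal.ofReal_add (by linarith) hr0).symm
        _ ≤ ENNReal.ofReal (1 - (κ - ε)) := ENNReal.ofReal_le_ofReal (by linarith)
        _ ≤ μ (g ⁻¹' A) := hAκ
        _ ≤ μ (f ⁻¹' cthickening r A) + μ {x | r < dist (f x) (g x)} :=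
          (measure_mono hsub).trans (measure_union_le _ _)
        _ ≤ μ (f ⁻¹' cthickening r A) + ENNReal.ofReal r := by gcongr
    exact (ENNReal.add_le_add_iff_right ENNReal.ofReal_ne_top).1 hsum
  refine (iInf_le_of_le (cthickening r A) <| (iInf₂_le hB hmass)).trans ?_
  have hdiam := ediam_cthickening_le (s := A) r.toNNReal
  rw [Real.coe_toNNReal r hr0] at hdiam
  refine hdiam.trans (add_le_add le_rfl ?_)
  rw [ENNReal.ofReal_mul zero_le_two, ENNReal.ofReal_ofNat]
  exact mul_le_mul_right (ENNReal.ofReal_le_ofReal hrε.le) 2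

/-- Let `κ ∈ (0,1)`, `0 < ε < κ`, `δ > 0`. If every almost 1-Lipschitz map
with error `δ` is within Ky Fan distance `ε` of a 1-Lipschitz map, then
`t-ObsDiam_Y^δ(X;-κ) ≤ ObsDiam_Y(X;-(κ-ε)) + 2ε`. -/
theorem tObsDiamErr_le_obsDiam_add
    {X : Type*} [MetricSpace X] [CompleteSpace X] [TopologicalSpace.SeparableSpace X]
    [MeasurableSpace X] [BorelSpace X] (μ : Measure X) [IsProbabilityMeasure μ]
    [μ.IsOpenPosMeasure]
    (Y : Type*) [MetricSpace Y] [MeasurableSpace Y] [BorelSpace Y]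
    (κ ε δ : ℝ) (hκ : κ ∈ Set.Ioo (0 : ℝ) 1) (hε : 0 < ε) (hεκ : ε < κ) (hδ : 0 < δ)
    (happrox : ∀ f ∈ almostLipErr X Y μ δ,
      ∃ g : X → Y, LipschitzWith 1 g ∧ kyFanDist μ f g < ε) :
    tObsDiamErr X Y μ δ κ ≤ obsDiam X Y μ (κ - ε) + ENNReal.ofReal (2 * ε) := by
  refine iSup₂_le fun f hf => ?_
  obtain ⟨g, hg, hfg⟩ := happrox f hf
  refine (partialDiam_map_le_of_kyFanDist_lt hf.1 hg.continuous.measurable hκ.2.le hfg).trans ?_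
  gcongr
  exact le_iSup₂ (f := fun (g : X → Y) (_ : LipschitzWith 1 g) =>
    partialDiam (μ.map g) (κ - ε)) g hg

end
end

section
/- Let (X,d_X,μ_X) be an mm space of finite diameter D that satisfies the doubling property with doubling constant 2^N. Let δ ∈ (0,1) and let X̃ ⊆ X be a Borel set with μ_X(X̃) ≥ 1−δ. Then for every x ∈ X, the closed ball B_{3Dδ^{1/N}}(x) intersects X̃, i.e., B_{3Dδ^{1/N}}(x) ∩ X̃ ≠ ∅. -/
/-!
If the ball `B` of radius `r = 3 D δ^{1/N}` around `x` missed `Xt`, then `μ B ≤ δ`. When `D ≤ r`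
the ball is all of `X`, so `Xt` would be null, which `δ < 1` forbids. Otherwise choose `n` with
`2^n r ≤ D < 2^(n+1) r`. Iterated doubling (`measure_closedBall_two_pow_mul_le`) gives
`1 = μ X ≤ 2^(N(n+1)) μ B ≤ (2^(n+1) δ^{1/N})^N`, while `2^n r ≤ D` says precisely
`2^(n+1) δ^{1/N} ≤ 2/3`: a contradiction, since `N ≠ 0` in this case.
-/

open MeasureTheory Metric Filter Set Topology ENNReal NNReal

noncomputable section

theorem measure_closedBall_two_pow_mul_le {X : Type*} [MetricSpace X] [MeasurableSpace X]
    (μ : Measure X) (N : ℕ)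
    (hdbl : ∀ (x : X) (r : ℝ), 0 < r →
      μ (Metric.closedBall x (2 * r)) ≤ (2 : ℝ≥0∞) ^ N * μ (Metric.closedBall x r))
    (x : X) {r : ℝ} (hr : 0 < r) (k : ℕ) :
    μ (Metric.closedBall x (2 ^ k * r)) ≤ ((2 : ℝ≥0∞) ^ N) ^ k * μ (Metric.closedBall x r) := by
  induction k with
  | zero => simp
  | succ k ih =>
    calc μ (Metric.closedBall x (2 ^ (k + 1) * r))
        = μ (Metric.closedBall x (2 * (2 ^ k * r))) := by rw [pow_succ']; ring_nf
      _ ≤ 2 ^ N * μ (Metric.closedBall x (2 ^ k * r)) := hdbl x _ (by positivity)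
      _ ≤ 2 ^ N * (((2 : ℝ≥0∞) ^ N) ^ k * μ (Metric.closedBall x r)) := by gcongr
      _ = _ := by rw [pow_succ', mul_assoc]

/-- Let `X` be an mm space of finite diameter `D` satisfying the doubling
property with constant `2^N`. If `δ ∈ (0,1)` and `X̃ ⊆ X` is Borel with `μ(X̃) ≥ 1-δ`, then for
every `x ∈ X`, the closed ball of radius `3·D·δ^{1/N}` around `x` meets `X̃`. -/
theorem closedBall_inter_nonempty_of_doubling
    {X : Type*} [MetricSpace X] [CompleteSpace X] [TopologicalSpace.SeparableSpace X]
    [MeasurableSpace X] [BorelSpace X] (μ : Measure X) [IsProbabilityMeasure μ]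
    [μ.IsOpenPosMeasure]
    (hbdd : Bornology.IsBounded (Set.univ : Set X))
    (D : ℝ) (hD : Metric.diam (Set.univ : Set X) = D)
    (N : ℕ)
    (hdbl : ∀ (x : X) (r : ℝ), 0 < r →
      μ (Metric.closedBall x (2 * r)) ≤ (2 : ℝ≥0∞) ^ N * μ (Metric.closedBall x r))
    (δ : ℝ) (hδ : δ ∈ Set.Ioo (0 : ℝ) 1)
    (Xt : Set X) (hXt : MeasurableSet Xt) (hXtμ : ENNReal.ofReal (1 - δ) ≤ μ Xt) :
    ∀ x : X, (Metric.closedBall x (3 * D * δ ^ ((1 : ℝ) / (N : ℝ))) ∩ Xt).Nonempty := by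
  intro x
  obtain ⟨hδ0, hδ1⟩ := hδ
  set s : ℝ := δ ^ ((1 : ℝ) / (N : ℝ)) with hs
  have hs0 : 0 < s := Real.rpow_pos_of_pos hδ0 _
  have hD0 : 0 ≤ D := hD ▸ Metric.diam_nonneg
  have hball : ∀ R : ℝ, D ≤ R → Metric.closedBall x R = Set.univ := fun R hR =>
    Set.eq_univ_of_forall fun y => Metric.mem_closedBall.2 <|
      ((Metric.dist_le_diam_of_mem hbdd (Set.mem_univ y) (Set.mem_univ x)).trans_eq hD).trans hR
  by_cases hDr : D ≤ 3 * D * s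
  · rw [hball _ hDr, Set.univ_inter]
    refine nonempty_of_measure_ne_zero (μ := μ) (ne_of_gt (lt_of_lt_of_le ?_ hXtμ))
    exact ENNReal.ofReal_pos.2 (by linarith)
  push Not at hDr
  have hDpos : 0 < D := by
    rcases hD0.eq_or_lt with h | h
    · rw [← h] at hDr
      simp at hDr
    · exact h
  -- With `N = 0` the exponent `1 / 0 = 0` gives `s = 1`, hence a radius exceeding `D`.
  have hN : N ≠ 0 := by
    rintro rfl
    have h1 : s = 1 := by simp [hs]
    rw [h1] at hDr
    linarith
  have hsN : s ^ N = δ := by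
    rw [hs, one_div]
    exact Real.rpow_inv_natCast_pow hδ0.le hN
  have hr : 0 < 3 * D * s := by positivity
  obtain ⟨n, hn1, hn2⟩ := exists_nat_pow_near (x := D / (3 * D * s)) (y := (2 : ℝ))
    ((one_le_div hr).2 hDr.le) one_lt_two
  rw [le_div_iff₀ hr] at hn1
  rw [div_lt_iff₀ hr] at hn2
  have hsmall : 2 ^ (n + 1) * s < 1 := by
    have h1 : D * (2 ^ n * s * 3) ≤ D * 1 := by linarith
    have h2 := le_of_mul_le_mul_left h1 hDpos
    rw [pow_succ]
    linarith
  have hprod : ((2 : ℝ) ^ N) ^ (n + 1) * δ < 1 := by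
    rw [← hsN, ← pow_mul, mul_comm N, pow_mul, ← mul_pow]
    exact pow_lt_one₀ (by positivity) hsmall hN
  by_contra hempty
  have hsub : Metric.closedBall x (3 * D * s) ⊆ Xtᶜ := fun y hy hyt => hempty ⟨y, hy, hyt⟩
  have hμ : μ (Metric.closedBall x (3 * D * s)) ≤ ENNReal.ofReal δ :=
    calc μ (Metric.closedBall x (3 * D * s)) ≤ μ Xtᶜ := measure_mono hsub
      _ = 1 - μ Xt := prob_compl_eq_one_sub hXt
      _ ≤ 1 - ENNReal.ofReal (1 - δ) := tsub_le_tsub_left hXtμ 1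
      _ = ENNReal.ofReal δ := by
        rw [← ENNReal.ofReal_one, ← ENNReal.ofReal_sub _ (by linarith)]
        ring_nf
  have hone : (1 : ℝ≥0∞) < 1 :=
    calc (1 : ℝ≥0∞) = μ (Metric.closedBall x (2 ^ (n + 1) * (3 * D * s))) := by
          rw [hball _ hn2.le, measure_univ]
      _ ≤ ((2 : ℝ≥0∞) ^ N) ^ (n + 1) * μ (Metric.closedBall x (3 * D * s)) :=
          measure_closedBall_two_pow_mul_le μ N hdbl x hr (n + 1)
      _ ≤ ((2 : ℝ≥0∞) ^ N) ^ (n + 1) * ENNReal.ofReal δ := by gcongr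
      _ = ENNReal.ofReal (((2 : ℝ) ^ N) ^ (n + 1) * δ) := by
          rw [ENNReal.ofReal_mul (by positivity), ENNReal.ofReal_pow (by positivity),
            ENNReal.ofReal_pow (by positivity), ENNReal.ofReal_ofNat]
      _ < 1 := ENNReal.ofReal_lt_one.2 hprod
  exact lt_irrefl _ hone

end
end

section
/- Let X be a compact mm space of diameter D satisfying the doubling property with doubling constant 2^N, let Y be a metric space, and let δ ∈ (0,1). Then for every f ∈ t-Lip₁^δ(X,Y) there exists g ∈ Lip₁^{δ+6Dδ^{1/N}}(X,Y) such that d_KF^{μ_X}(f,g) ≤ δ. -/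
/-!
The exceptional set of an almost 1-Lipschitz map `f` has measure at most `δ`, whereas iterating the
doubling inequality from the scale `D` down to `D / 2 ^ n` shows that every ball of radius
`D / 2 ^ n` has measure at least `2 ^ (-n N)`. Choosing `n` with
`δ ^ (1 / N) < 2 ^ (-n) < 3 δ ^ (1 / N)`, these balls have measure larger than `δ`, so every such
ball meets the good set `X'`, which is therefore `3 D δ ^ (1 / N)`-dense
(`exists_mem_dist_lt_of_doubling`). Precomposing `f` with a Borel map `X → X'` that fixes `X'` and
moves points by less than `s = 3 D δ ^ (1 / N)` gives a map that agrees with `f` on `X'` and has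
error `δ + 2 s` (`exists_lipErr_of_dense`). Borel measurability is obtained by sending a point
outside `X'` to the first `s`-close member of a countable dense subset of `X'`.
-/
open MeasureTheory Metric Filter Set Topology ENNReal NNReal

noncomputable section

/-- Iterated doubling: in a space of diameter `D`, a ball of radius `D / 2 ^ n` has measure
at least `2 ^ (-n N)`, stated multiplicatively. -/
lemma one_le_mul_measure_closedBall {X : Type*} [MetricSpace X] [CompactSpace X]
    [MeasurableSpace X] (μ : Measure X) [IsProbabilityMeasure μ]
    (D : ℝ) (hD : Metric.diam (Set.univ : Set X) = D) (hD0 : 0 < D) (N : ℕ)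
    (hdbl : ∀ (x : X) (r : ℝ), 0 < r →
      μ (Metric.closedBall x (2 * r)) ≤ (2 : ℝ≥0∞) ^ N * μ (Metric.closedBall x r))
    (x : X) (n : ℕ) :
    1 ≤ ((2 : ℝ≥0∞) ^ N) ^ n * μ (Metric.closedBall x (D * (1 / 2 : ℝ) ^ n)) := by
  induction n with
  | zero =>
    have h : Metric.closedBall x (D * (1 / 2 : ℝ) ^ 0) = Set.univ := by
      ext y
      simp only [pow_zero, mul_one, Metric.mem_closedBall, Set.mem_univ, iff_true]
      rw [← hD]
      exact Metric.dist_le_diam_of_mem isCompact_univ.isBounded (Set.mem_univ _) (Set.mem_univ _)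
    rw [h]
    simp
  | succ n ih =>
    have h := hdbl x (D * (1 / 2 : ℝ) ^ (n + 1)) (by positivity)
    have e : 2 * (D * (1 / 2 : ℝ) ^ (n + 1)) = D * (1 / 2 : ℝ) ^ n := by ring
    rw [e] at h
    calc 1 ≤ _ := ih
      _ ≤ _ := mul_le_mul_right h _
      _ = _ := by rw [pow_succ (_ ^ N), mul_assoc]

/-- In a doubling space, a set of measure at least `1 - δ` is `3 D δ ^ (1 / N)`-dense. -/
lemma exists_mem_dist_lt_of_doubling {X : Type*} [MetricSpace X] [CompactSpace X]
    [MeasurableSpace X] (μ : Measure X) [IsProbabilityMeasure μ]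
    (D : ℝ) (hD : Metric.diam (Set.univ : Set X) = D) (hD0 : 0 < D) (N : ℕ)
    (hdbl : ∀ (x : X) (r : ℝ), 0 < r →
      μ (Metric.closedBall x (2 * r)) ≤ (2 : ℝ≥0∞) ^ N * μ (Metric.closedBall x r))
    (δ : ℝ) (h0 : 0 < δ) (h1 : δ < 1) (X' : Set X) (hX' : MeasurableSet X')
    (hμ : ENNReal.ofReal (1 - δ) ≤ μ X') (x : X) :
    ∃ y ∈ X', dist x y < 3 * D * δ ^ ((1 : ℝ) / (N : ℝ)) := by
  rcases Nat.eq_zero_or_pos N with rfl | hN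
  · -- here the exponent `1 / 0` is `0`, so the claimed radius is `3 * D`
    have hne : X'.Nonempty := by
      apply nonempty_of_measure_ne_zero (μ := μ)
      refine (lt_of_lt_of_le ?_ hμ).ne'
      simpa using h1
    obtain ⟨y, hy⟩ := hne
    refine ⟨y, hy, ?_⟩
    have : dist x y ≤ D := by
      rw [← hD]
      exact Metric.dist_le_diam_of_mem isCompact_univ.isBounded (Set.mem_univ _) (Set.mem_univ _)
    simp
    linarith
  set t := δ ^ ((1 : ℝ) / (N : ℝ)) with ht
  have ht0 : 0 < t := by positivity
  have ht1 : t < 1 := Real.rpow_lt_one h0.le h1 (by positivity)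
  have htN : t ^ N = δ := by
    rw [ht, one_div]
    exact Real.rpow_inv_natCast_pow h0.le hN.ne'
  -- `u` is slightly larger than `t`, so that the ball has measure strictly larger than `δ`
  obtain ⟨u, htu, hu1, hu2⟩ : ∃ u, t < u ∧ u ≤ 1 ∧ 2 * u < 3 * t :=
    ⟨min 1 (5 / 4 * t), lt_min ht1 (by linarith), min_le_left _ _, by
      have := min_le_right 1 (5 / 4 * t)
      linarith⟩
  obtain ⟨n, hn1, hn2⟩ := exists_nat_pow_near_of_lt_one (ht0.trans htu) hu1
    (by norm_num : (0 : ℝ) < 1 / 2) (by norm_num)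
  have hball := one_le_mul_measure_closedBall μ D hD hD0 N hdbl x n
  have hlt : 1 - μ.real X' < μ.real (Metric.closedBall x (D * (1 / 2 : ℝ) ^ n)) := by
    have a1 : 1 - δ ≤ μ.real X' := by
      exact (ENNReal.ofReal_le_iff_le_toReal (measure_ne_top _ _)).1 hμ
    have a2 : 1 ≤ ((2 : ℝ) ^ N) ^ n * μ.real (Metric.closedBall x (D * (1 / 2 : ℝ) ^ n)) := by
      have := ENNReal.toReal_mono (ENNReal.mul_ne_top (by finiteness) (measure_ne_top _ _)) hball
      simpa [ENNReal.toReal_mul, Measure.real] using this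
    have a3 : δ < ((1 / 2 : ℝ) ^ n) ^ N := by
      rw [← htN]
      exact pow_lt_pow_left₀ (htu.trans_le hn2) ht0.le hN.ne'
    have a4 : ((1 / 2 : ℝ) ^ n) ^ N * ((2 : ℝ) ^ N) ^ n = 1 := by
      rw [← pow_mul, ← pow_mul, mul_comm N n, ← mul_pow]
      norm_num
    have a5 : 0 < ((1 / 2 : ℝ) ^ n) ^ N := by positivity
    have a6 := mul_le_mul_of_nonneg_left a2 a5.le
    rw [← mul_assoc, a4] at a6
    linarith
  have hmeet : (X' ∩ Metric.closedBall x (D * (1 / 2 : ℝ) ^ n)).Nonempty := by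
    by_contra hc
    have hsub : Metric.closedBall x (D * (1 / 2 : ℝ) ^ n) ⊆ X'ᶜ := fun y hy hy' => hc ⟨y, hy', hy⟩
    have := measureReal_mono (μ := μ) hsub
    rw [probReal_compl_eq_one_sub hX'] at this
    linarith
  obtain ⟨y, hy, hyb⟩ := hmeet
  refine ⟨y, hy, ?_⟩
  rw [Metric.mem_closedBall, dist_comm] at hyb
  refine hyb.trans_lt ?_
  rw [pow_succ] at hn1
  calc D * (1 / 2 : ℝ) ^ n < D * (3 * t) := by
        gcongr
        linarith
    _ = 3 * D * t := by ring

/-- A Borel map with additive error `δ` on an `s`-dense Borel set `X'` can be modified off `X'` to a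
Borel map with additive error `δ + 2 * s` everywhere. -/
lemma exists_lipErr_of_dense {X Y : Type*} [MetricSpace X] [SecondCountableTopology X]
    [MeasurableSpace X] [BorelSpace X] [MetricSpace Y] [MeasurableSpace Y] [Nonempty X]
    (f : X → Y) (hf : Measurable f) (X' : Set X) (hX' : MeasurableSet X') (δ s : ℝ)
    (hlip : ∀ z₁ ∈ X', ∀ z₂ ∈ X', dist (f z₁) (f z₂) ≤ dist z₁ z₂ + δ)
    (hd : ∀ x, ∃ y ∈ X', dist x y < s) :
    ∃ g ∈ lipErr X Y (δ + 2 * s), ∀ x ∈ X', g x = f x := by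
  classical
  have : Nonempty X' := by
    obtain ⟨y, hy, -⟩ := hd (Classical.arbitrary X)
    exact ⟨⟨y, hy⟩⟩
  have hex : ∀ x : X, ∃ n, dist x (TopologicalSpace.denseSeq X' n : X) < s := by
    intro x
    obtain ⟨y, hy, hxy⟩ := hd x
    obtain ⟨n, hn⟩ := (TopologicalSpace.denseRange_denseSeq X').exists_dist_lt
      (⟨y, hy⟩ : X') (sub_pos.2 hxy)
    refine ⟨n, ?_⟩
    have h1 : dist y (TopologicalSpace.denseSeq X' n : X) < s - dist x y := hn
    linarith [dist_triangle x y (TopologicalSpace.denseSeq X' n : X)]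
  let k : X → ℕ := fun x => Nat.find (hex x)
  have hk : Measurable k := measurable_find hex fun n =>
    measurableSet_lt (measurable_id.dist measurable_const) measurable_const
  let p : X → X := fun x => if x ∈ X' then x else (TopologicalSpace.denseSeq X' (k x) : X)
  have hs : ∀ x : X, 0 < s := fun x => by
    obtain ⟨y, -, h⟩ := hd x
    exact dist_nonneg.trans_lt h
  have hp1 : ∀ x, p x ∈ X' := fun x => by
    by_cases h : x ∈ X' <;> simp [p, h]
  have hp2 : ∀ x, dist x (p x) ≤ s := fun x => by
    by_cases h : x ∈ X'
    · simpa [p, h] using (hs x).le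
    · simpa [p, h] using (Nat.find_spec (hex x)).le
  have hpm : Measurable p := by
    refine Measurable.ite hX' measurable_id ?_
    exact (measurable_from_nat (f := fun n => (TopologicalSpace.denseSeq X' n : X))).comp hk
  refine ⟨fun x => f (p x), ⟨hf.comp hpm, fun z₁ z₂ => ?_⟩, fun x hx => by simp [p, hx]⟩
  have h1 := hlip _ (hp1 z₁) _ (hp1 z₂)
  have h2 := dist_triangle4 (p z₁) z₁ z₂ (p z₂)
  have h3 := hp2 z₁
  have h4 := hp2 z₂
  rw [dist_comm] at h3
  linarith

/-- Maps that agree on a measurable set of measure at least `1 - δ` are at Ky Fan distance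
at most `δ`. -/
lemma kyFanDist_le_of_eqOn {X Y : Type*} [MeasurableSpace X] [MetricSpace Y]
    (μ : Measure X) [IsProbabilityMeasure μ] (f g : X → Y) (δ : ℝ) (h0 : 0 ≤ δ)
    (X' : Set X) (hX' : MeasurableSet X') (hμ : ENNReal.ofReal (1 - δ) ≤ μ X')
    (h : ∀ x ∈ X', g x = f x) : kyFanDist μ f g ≤ δ := by
  refine csInf_le ⟨0, fun _ hε => hε.1⟩ ⟨h0, ?_⟩
  have hsub : {x | δ < dist (f x) (g x)} ⊆ X'ᶜ := by
    intro x hx hx'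
    rw [Set.mem_ofPred_eq, h x hx', dist_self] at hx
    exact absurd hx (not_lt.2 h0)
  refine (measure_mono hsub).trans ?_
  rw [prob_compl_eq_one_sub hX', tsub_le_iff_left]
  calc (1 : ℝ≥0∞) = ENNReal.ofReal ((1 - δ) + δ) := by simp
    _ ≤ ENNReal.ofReal (1 - δ) + ENNReal.ofReal δ := ENNReal.ofReal_add_le
    _ ≤ _ := by gcongr

/-- Let `X` be a compact mm space of diameter `D` satisfying the doubling
property with constant `2^N`, `Y` a metric space and `δ ∈ (0,1)`. Then every almost 1-Lipschitz
map with error `δ` is within Ky Fan distance `δ` of a 1-Lipschitz map with error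
`δ + 6·D·δ^{1/N}`. -/
theorem exists_lipErr_near_almostLipErr_of_doubling
    {X : Type*} [MetricSpace X] [CompactSpace X] [CompleteSpace X]
    [TopologicalSpace.SeparableSpace X] [MeasurableSpace X] [BorelSpace X]
    (μ : Measure X) [IsProbabilityMeasure μ] [μ.IsOpenPosMeasure]
    (D : ℝ) (hD : Metric.diam (Set.univ : Set X) = D)
    (N : ℕ)
    (hdbl : ∀ (x : X) (r : ℝ), 0 < r →
      μ (Metric.closedBall x (2 * r)) ≤ (2 : ℝ≥0∞) ^ N * μ (Metric.closedBall x r))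
    (Y : Type*) [MetricSpace Y] [MeasurableSpace Y] [BorelSpace Y]
    (δ : ℝ) (hδ : δ ∈ Set.Ioo (0 : ℝ) 1) :
    ∀ f ∈ almostLipErr X Y μ δ,
      ∃ g ∈ lipErr X Y (δ + 6 * D * δ ^ ((1 : ℝ) / (N : ℝ))), kyFanDist μ f g ≤ δ := by
  rintro f ⟨hf, X', hX', hμ, hlip⟩
  obtain ⟨h0, h1⟩ := hδ
  have : SecondCountableTopology X := UniformSpace.secondCountable_of_separable X
  have : Nonempty X := nonempty_of_isProbabilityMeasure μ
  have hdD : ∀ x y : X, dist x y ≤ D := fun x y => by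
    rw [← hD]
    exact Metric.dist_le_diam_of_mem isCompact_univ.isBounded (Set.mem_univ _) (Set.mem_univ _)
  have hDnn : 0 ≤ D := hD ▸ Metric.diam_nonneg
  rcases hDnn.eq_or_lt with hD0 | hD0
  · -- `X` is a single point
    refine ⟨f, ⟨hf, fun z₁ z₂ => ?_⟩,
      kyFanDist_le_of_eqOn μ f f δ h0.le X' hX' hμ fun _ _ => rfl⟩
    have hz : z₁ = z₂ := dist_le_zero.1 (hD0 ▸ hdD z₁ z₂)
    simp [hz, ← hD0, h0.le]
  · obtain ⟨g, hg, hgf⟩ := exists_lipErr_of_dense f hf X' hX' δ _ hlip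
      (exists_mem_dist_lt_of_doubling μ D hD hD0 N hdbl δ h0 h1 X' hX' hμ)
    refine ⟨g, ?_, kyFanDist_le_of_eqOn μ f g δ h0.le X' hX' hμ hgf⟩
    convert hg using 2
    ring

end
end

section
/- Let X and Y be mm spaces and ε > 0. (i) If there exists an ε-mm isomorphism f : X → Y, then □(X,Y) ≤ 3ε. (ii) If □(X,Y) < ε, then there exists a 3ε-mm isomorphism from X to Y. -/
/-!
Part (i) rests on a Strassen-type theorem with slack (`exists_coupling_close`): if `ν A ≤ f_♯μ
(U_ε A) + ε` for all Borel `A`, then for every `η > 0` some coupling of `μ` and `ν` gives mass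
at least `1 - (ε + η)` to `{(x, y) | d (f x) y ≤ ε + η}`. Coupling `μ` itself with `ν`, instead
of `f_♯μ` with `ν`, makes a gluing of couplings unnecessary. An `ε`-mm isomorphism meets the
hypothesis at every radius above `ε`. Restricting that set to `x ∈ X'`, where `X'` is the set
of almost full measure from the `ε`-mm isomorphism, gives a set of distortion at most `3ε + 2η`
and `ξ`-mass at least `1 - (2ε + η)`; then let `η → 0`.

The Strassen-type theorem is reduced to a finite transport problem by cutting `Y` into
countably many Borel cells of small diameter, of which all but finitely many are negligible.
The finite problem (`exists_transport`) follows from Hall's marriage theorem after rounding all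
masses to multiples of `1 / N`, with dummy vertices accounting for the defect
(`exists_nat_transport`). The transport matrix is spread over products of cells
(`exists_measure_of_weights`) and the resulting partial coupling is completed by a product
measure (`exists_coupling_ge`).

In part (ii), take a coupling `ξ` and a set `S` with `1 - ξ S < ε` and `dis S < ε`, and cut `X`
into countably many Borel cells of diameter at most `ε - r`, where `dis S ≤ r < ε`. On each
cell that meets the projection of `S`, let `f` be constant, equal to the second coordinate of a
point of `S` over that cell. No measurable selection is needed, and `d (f x) y < ε` for all
`(x, y) ∈ S`, which bounds the Prokhorov distance by `ε`.
-/

open MeasureTheory Metric Filter Set Topology ENNReal NNReal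

noncomputable section

/-! ### Finite transport -/

/-- Hall's theorem with multiplicities and defect `D`: if the demand `b` of every set `J` exceeds
the supply `a` available to it through `R` by at most `D`, then an integral transport `m` along `R`
meets all of the demand except for at most `D` units. -/
theorem exists_nat_transport {I : Type*} [Fintype I] [DecidableEq I] (a b : I → ℕ)
    (R : I → I → Prop) [∀ i j, Decidable (R i j)] (D : ℕ)
    (h : ∀ J : Finset I, ∑ j ∈ J, b j ≤
      ∑ i ∈ Finset.univ.filter (fun i => ∃ j ∈ J, R i j), a i + D) :
    ∃ m : I → I → ℕ, (∀ i, ∑ j, m i j ≤ a i) ∧ (∀ j, ∑ i, m i j ≤ b j) ∧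
      (∀ i j, m i j ≠ 0 → R i j) ∧ ∑ j, b j ≤ ∑ i, ∑ j, m i j + D := by
  classical
  -- Match units of demand with units of supply, or with one of `D` dummies that suit any demand.
  let t : (Σ j, Fin (b j)) → Finset ((Σ i, Fin (a i)) ⊕ Fin D) := fun l =>
    Finset.univ.filter (fun r => Sum.elim (fun s => R s.1 l.1) (fun _ => True) r)
  have hall : ∀ T : Finset (Σ j, Fin (b j)), T.card ≤ (T.biUnion t).card := by
    intro T
    -- For empty `T` no dummy need be reachable, so the count below needs `T` nonempty.
    rcases T.eq_empty_or_nonempty with rfl | ⟨l₀, hl₀⟩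
    · simp
    set J := T.image Sigma.fst with hJ
    have h1 : T ⊆ J.sigma (fun _ => Finset.univ) := by
      intro l hl
      simp only [Finset.mem_sigma, Finset.mem_univ, and_true, hJ]
      exact Finset.mem_image_of_mem _ hl
    have h2 : ((Finset.univ.filter (fun i => ∃ j ∈ J, R i j)).sigma
        (fun i => (Finset.univ : Finset (Fin (a i))))).disjSum (Finset.univ : Finset (Fin D))
        ⊆ T.biUnion t := by
      intro r hr
      rw [Finset.mem_biUnion]
      rcases r with s | d
      · simp only [Finset.inl_mem_disjSum, Finset.mem_sigma, Finset.mem_filter,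
          Finset.mem_univ, true_and, and_true, hJ, Finset.mem_image] at hr
        obtain ⟨j, ⟨l, hl, rfl⟩, hR⟩ := hr
        exact ⟨l, hl, by simpa [t] using hR⟩
      · exact ⟨l₀, hl₀, by simp [t]⟩
    calc T.card ≤ ∑ j ∈ J, b j := by simpa using Finset.card_le_card h1
      _ ≤ _ := h J
      _ ≤ _ := by simpa using Finset.card_le_card h2
  obtain ⟨F, hF, hFt⟩ := (Finset.all_card_le_biUnion_card_iff_exists_injective t).1 hall
  -- The site supplying a given unit of demand, or `none` if that unit is matched with a dummy.
  let G : (Σ j, Fin (b j)) → Option I := fun l =>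
    Sum.elim (fun s => some s.1) (fun _ => none) (F l)
  refine ⟨fun i j => (Finset.univ.filter (fun l => G l = some i ∧ l.1 = j)).card,
    ?_, ?_, ?_, ?_⟩
  · intro i
    have h1 : ∑ j, (Finset.univ.filter (fun l => G l = some i ∧ l.1 = j)).card
        = (Finset.univ.filter (fun l => G l = some i)).card := by
      rw [Finset.card_eq_sum_card_fiberwise (f := Sigma.fst) (t := Finset.univ)
        (fun _ _ => by simp)]
      simp [Finset.filter_filter]
    rw [h1]
    have h2 : (Finset.univ.filter (fun l => G l = some i)).image F ⊆
        (({i} : Finset I).sigma (fun i => (Finset.univ : Finset (Fin (a i))))).map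
          Function.Embedding.inl := by
      intro r hr
      simp only [Finset.mem_image, Finset.mem_filter, Finset.mem_univ, true_and] at hr
      obtain ⟨l, hl, rfl⟩ := hr
      simp only [G] at hl
      rcases hr : F l with s | d
      · rw [hr] at hl
        simp only [Sum.elim_inl, Option.some.injEq] at hl
        simp [hl]
      · simp [hr] at hl
    have := Finset.card_le_card h2
    rw [Finset.card_image_of_injective _ hF] at this
    simpa using this
  · intro j
    have h1 : ∑ i, (Finset.univ.filter (fun l => G l = some i ∧ l.1 = j)).card
        ≤ (Finset.univ.filter (fun l : (Σ j, Fin (b j)) => l.1 = j)).card := by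
      rw [Finset.card_eq_sum_card_fiberwise (f := G) (t := Finset.univ)
        (fun _ _ => by simp), Fintype.sum_option]
      simp only [Finset.filter_filter]
      refine le_add_left (Finset.sum_le_sum fun i _ => le_of_eq ?_)
      congr 1; ext l; simp [and_comm]
    refine h1.trans ?_
    have h2 : (Finset.univ.filter (fun l : (Σ j, Fin (b j)) => l.1 = j)) ⊆
        ({j} : Finset I).sigma (fun _ => Finset.univ) := by
      intro l; simp
    simpa using Finset.card_le_card h2
  · intro i j hm
    obtain ⟨l, hl⟩ := Finset.card_ne_zero.1 hm
    simp only [Finset.mem_filter, Finset.mem_univ, true_and, G] at hl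
    obtain ⟨hl, rfl⟩ := hl
    have := hFt l
    rcases hr : F l with s | d
    · rw [hr] at hl this
      simp only [Sum.elim_inl, Option.some.injEq] at hl
      subst hl
      simpa [t] using this
    · simp [hr] at hl
  · have h1 : ∑ i, ∑ j, (Finset.univ.filter (fun l => G l = some i ∧ l.1 = j)).card
        = ∑ i, (Finset.univ.filter (fun l => G l = some i)).card := by
      refine Finset.sum_congr rfl fun i _ => ?_
      rw [Finset.card_eq_sum_card_fiberwise (f := Sigma.fst) (t := Finset.univ)
        (fun _ _ => by simp)]
      simp [Finset.filter_filter]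
    have h2 : ∑ j, b j = (Finset.univ.filter (fun l => G l = none)).card +
        ∑ i, (Finset.univ.filter (fun l => G l = some i)).card := by
      rw [← Fintype.sum_option (fun o => (Finset.univ.filter (fun l => G l = o)).card),
        ← Finset.card_eq_sum_card_fiberwise (f := G) (t := Finset.univ) (fun _ _ => by simp)]
      simp
    have h3 : (Finset.univ.filter (fun l => G l = none)).image F ⊆
        (Finset.univ : Finset (Fin D)).map Function.Embedding.inr := by
      intro r hr
      simp only [Finset.mem_image, Finset.mem_filter, Finset.mem_univ, true_and] at hr
      obtain ⟨l, hl, rfl⟩ := hr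
      simp only [G] at hl
      rcases hr : F l with s | d
      · simp [hr] at hl
      · simp
    have h4 := Finset.card_le_card h3
    rw [Finset.card_image_of_injective _ hF] at h4
    simp only [Finset.card_map, Finset.card_univ, Fintype.card_fin] at h4
    rw [h1, h2]; omega

/-- Real-valued version of `exists_nat_transport`, with a loss `η` due to rounding the masses to
multiples of `1 / N`. -/
theorem exists_transport {I : Type*} [Fintype I] [DecidableEq I] (p q : I → ℝ)
    (hp : ∀ i, 0 ≤ p i) (hq : ∀ i, 0 ≤ q i)
    (R : I → I → Prop) [∀ i j, Decidable (R i j)] (c : ℝ) (hc : 0 ≤ c)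
    (h : ∀ J : Finset I, ∑ j ∈ J, q j ≤
      ∑ i ∈ Finset.univ.filter (fun i => ∃ j ∈ J, R i j), p i + c) (η : ℝ) (hη : 0 < η) :
    ∃ w : I → I → ℝ, (∀ i j, 0 ≤ w i j) ∧ (∀ i, ∑ j, w i j ≤ p i) ∧ (∀ j, ∑ i, w i j ≤ q j) ∧
      (∀ i j, w i j ≠ 0 → R i j) ∧ ∑ j, q j ≤ ∑ i, ∑ j, w i j + c + η := by
  obtain ⟨N, hN⟩ := exists_nat_gt ((2 * Fintype.card I + 1) / η)
  have hN0 : (0 : ℝ) < N := lt_of_le_of_lt (by positivity) hN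
  rw [div_lt_iff₀ hη] at hN
  -- Each rounding loses less than one unit per site; `card I` extra dummies absorb the loss in `p`.
  obtain ⟨m, hm1, hm2, hm3, hm4⟩ := exists_nat_transport (fun i => ⌊N * p i⌋₊)
    (fun i => ⌊N * q i⌋₊) R ⌈N * c + Fintype.card I⌉₊ (by
      intro J
      set K := Finset.univ.filter (fun i => ∃ j ∈ J, R i j)
      have h1 : ∑ j ∈ J, (⌊N * q j⌋₊ : ℝ) ≤ N * ∑ j ∈ J, q j := by
        rw [Finset.mul_sum]
        exact Finset.sum_le_sum fun j _ => Nat.floor_le (mul_nonneg hN0.le (hq j))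
      have h2 : N * ∑ i ∈ K, p i ≤ ∑ i ∈ K, (⌊N * p i⌋₊ : ℝ) + Fintype.card I := by
        calc N * ∑ i ∈ K, p i ≤ ∑ i ∈ K, ((⌊N * p i⌋₊ : ℝ) + 1) := by
              rw [Finset.mul_sum]
              exact Finset.sum_le_sum fun j _ => (Nat.lt_floor_add_one _).le
          _ = ∑ i ∈ K, (⌊N * p i⌋₊ : ℝ) + K.card := by simp [Finset.sum_add_distrib]
          _ ≤ _ := by
              have := Finset.card_le_univ K
              gcongr
      have h3 := mul_le_mul_of_nonneg_left (h J) hN0.le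
      have h4 := Nat.le_ceil (N * c + Fintype.card I)
      have : (∑ j ∈ J, (⌊N * q j⌋₊ : ℝ)) ≤ ∑ i ∈ K, (⌊N * p i⌋₊ : ℝ) +
          (⌈N * c + Fintype.card I⌉₊ : ℝ) := by
        rw [mul_add] at h3; linarith
      exact_mod_cast this)
  refine ⟨fun i j => m i j / N, fun i j => by positivity, fun i => ?_, fun j => ?_,
    fun i j hw => hm3 i j ?_, ?_⟩
  · rw [← Finset.sum_div, div_le_iff₀ hN0]
    have := hm1 i
    have h2 := Nat.floor_le (mul_nonneg hN0.le (hp i))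
    have h3 : (∑ j, (m i j : ℝ)) ≤ (⌊N * p i⌋₊ : ℝ) := by exact_mod_cast this
    linarith
  · rw [← Finset.sum_div, div_le_iff₀ hN0]
    have := hm2 j
    have h2 := Nat.floor_le (mul_nonneg hN0.le (hq j))
    have h3 : (∑ i, (m i j : ℝ)) ≤ (⌊N * q j⌋₊ : ℝ) := by exact_mod_cast this
    linarith
  · rintro h0; simp [h0] at hw
  · simp only [← Finset.sum_div]
    have h1 : (∑ j, (⌊N * q j⌋₊ : ℝ)) ≤ ∑ i, ∑ j, (m i j : ℝ) +
        (⌈N * c + Fintype.card I⌉₊ : ℝ) := by exact_mod_cast hm4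
    have h2 := Nat.ceil_lt_add_one (a := N * c + Fintype.card I) (by positivity)
    have h3 : N * ∑ j, q j ≤ ∑ j, (⌊N * q j⌋₊ : ℝ) + Fintype.card I := by
      calc N * ∑ i, q i ≤ ∑ i, ((⌊N * q i⌋₊ : ℝ) + 1) := by
            rw [Finset.mul_sum]
            exact Finset.sum_le_sum fun j _ => (Nat.lt_floor_add_one _).le
        _ = _ := by simp [Finset.sum_add_distrib]
    refine le_of_mul_le_mul_left ?_ hN0
    rw [mul_add, mul_add, mul_div_cancel₀ _ hN0.ne']
    linarith

/-! ### Couplings -/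

/-- When `m = 0` the scalar `m⁻¹` is `∞`, but then `γ = 0` and the identity still holds. -/
theorem inv_smul_smul_of_mass {Z : Type*} [MeasurableSpace Z] (γ : Measure Z) {m : ℝ≥0∞}
    (hγ : γ univ = m) (hm : m ≠ ∞) : m⁻¹ • (m • γ) = γ := by
  by_cases h0 : m = 0
  · have : γ = 0 := by rw [← Measure.measure_univ_eq_zero, hγ, h0]
    simp [this]
  · rw [smul_smul, ENNReal.inv_mul_cancel h0 hm, one_smul]

/-- A partial coupling extends to a coupling, by adding the normalised product of what is missing
from the two marginals. -/
theorem exists_coupling_ge {X Y : Type*} [MeasurableSpace X] [MeasurableSpace Y]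
    (μ : Measure X) [IsProbabilityMeasure μ] (ν : Measure Y) [IsProbabilityMeasure ν]
    (ξ₀ : Measure (X × Y)) (h1 : ξ₀.map Prod.fst ≤ μ) (h2 : ξ₀.map Prod.snd ≤ ν) :
    ∃ ξ : Measure (X × Y), ξ.map Prod.fst = μ ∧ ξ.map Prod.snd = ν ∧ ξ₀ ≤ ξ := by
  have f1 : IsFiniteMeasure (ξ₀.map Prod.fst) := isFiniteMeasure_of_le μ h1
  have f2 : IsFiniteMeasure (ξ₀.map Prod.snd) := isFiniteMeasure_of_le ν h2
  set α := μ - ξ₀.map Prod.fst with hα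
  set β := ν - ξ₀.map Prod.snd with hβ
  have ha : α univ = 1 - ξ₀ univ := by
    rw [hα, Measure.sub_apply .univ h1, Measure.map_apply measurable_fst .univ]; simp
  have hb : β univ = 1 - ξ₀ univ := by
    rw [hβ, Measure.sub_apply .univ h2, Measure.map_apply measurable_snd .univ]; simp
  refine ⟨ξ₀ + (1 - ξ₀ univ)⁻¹ • α.prod β, ?_, ?_, Measure.le_add_right le_rfl⟩
  · rw [Measure.map_add _ _ measurable_fst, Measure.map_smul, Measure.map_fst_prod, hb,
      inv_smul_smul_of_mass α ha (by simp),
      add_comm]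
    exact Measure.sub_add_cancel_of_le h1
  · rw [Measure.map_add _ _ measurable_snd, Measure.map_smul, Measure.map_snd_prod, ha,
      inv_smul_smul_of_mass β hb (by simp),
      add_comm]
    exact Measure.sub_add_cancel_of_le h2

/-! ### Discretisation and Strassen's theorem with slack -/

/-- A separable metric space is cut into countably many Borel cells of diameter at most `δ`, the
fibres of `g`. -/
theorem exists_measurable_index (Z : Type*) [MetricSpace Z] [TopologicalSpace.SeparableSpace Z]
    [Nonempty Z] [MeasurableSpace Z] [BorelSpace Z] (δ : ℝ) (hδ : 0 < δ) :
    ∃ g : Z → ℕ, Measurable g ∧ ∀ z z', g z = g z' → dist z z' < δ := by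
  classical
  have hex : ∀ z : Z, ∃ n, dist z (TopologicalSpace.denseSeq Z n) < δ / 2 := fun z =>
    (TopologicalSpace.denseRange_denseSeq Z).exists_dist_lt z (half_pos hδ)
  refine ⟨fun z => Nat.find (hex z), measurable_find hex fun n => ?_, fun z z' h => ?_⟩
  · exact measurableSet_ball (x := TopologicalSpace.denseSeq Z n) (ε := δ / 2)
  · have h1 := Nat.find_spec (hex z)
    have h2 := Nat.find_spec (hex z')
    simp only at h
    rw [← h] at h2
    have := dist_triangle_right z z' (TopologicalSpace.denseSeq Z (Nat.find (hex z)))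
    linarith

theorem exists_tail_le (ρ : Measure ℕ) [IsFiniteMeasure ρ] (η : ℝ) (hη : 0 < η) :
    ∃ M, ∀ n, M ≤ n → ρ.real (Ici n) < η := by
  have h : Tendsto (fun n => ρ (Ici n)) atTop (𝓝 (ρ (⋂ n, Ici n))) :=
    tendsto_measure_iInter_atTop (fun _ => measurableSet_Ici.nullMeasurableSet)
      (fun _ _ h => Ici_subset_Ici.2 h) ⟨0, measure_ne_top _ _⟩
  have h0 : (⋂ n : ℕ, Ici n) = ∅ := by
    ext k; simp only [mem_iInter, mem_Ici, mem_empty_iff_false, iff_false, not_forall, not_le]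
    exact ⟨k + 1, by omega⟩
  rw [h0, measure_empty] at h
  have h2 := (ENNReal.tendsto_toReal ENNReal.zero_ne_top).comp h
  exact eventually_atTop.1 (h2.eventually (gt_mem_nhds (by simpa using hη)))

/-- A transport matrix `w` between two finite families of disjoint cells gives a partial coupling of
`μ` and `ν`, by spreading each `w i j` over `A i ×ˢ B j` as a product of conditional measures. -/
theorem exists_measure_of_weights {X Y I : Type*} [Fintype I]
    [MeasurableSpace X] [MeasurableSpace Y]
    (μ : Measure X) [IsProbabilityMeasure μ] (ν : Measure Y) [IsProbabilityMeasure ν]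
    (A : I → Set X) (B : I → Set Y) (hA : ∀ i, MeasurableSet (A i))
    (hB : ∀ i, MeasurableSet (B i)) (hAd : Pairwise (Function.onFun Disjoint A))
    (hBd : Pairwise (Function.onFun Disjoint B)) (w : I → I → ℝ) (hw : ∀ i j, 0 ≤ w i j)
    (hw1 : ∀ i, ∑ j, w i j ≤ μ.real (A i)) (hw2 : ∀ j, ∑ i, w i j ≤ ν.real (B j))
    (G : Set (X × Y)) (hG : ∀ i j, w i j ≠ 0 → A i ×ˢ B j ⊆ G) :
    ∃ ξ₀ : Measure (X × Y), ξ₀.map Prod.fst ≤ μ ∧ ξ₀.map Prod.snd ≤ ν ∧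
      ENNReal.ofReal (∑ i, ∑ j, w i j) ≤ ξ₀ G := by
  refine ⟨∑ i, ∑ j, ENNReal.ofReal (w i j) •
    (ProbabilityTheory.cond μ (A i)).prod (ProbabilityTheory.cond ν (B j)), ?_, ?_, ?_⟩
  · refine Measure.le_iff.2 fun U hU => ?_
    rw [Measure.map_apply measurable_fst hU, ← prod_univ]
    simp only [Measure.coe_finsetSum, Finset.sum_apply, Measure.smul_apply, Measure.prod_prod,
      smul_eq_mul]
    calc _ ≤ ∑ i, (∑ j, ENNReal.ofReal (w i j)) * ProbabilityTheory.cond μ (A i) U := by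
          simp only [Finset.sum_mul]
          gcongr
          exact mul_le_of_le_one_right' prob_le_one
      _ ≤ ∑ i, μ (A i) * ProbabilityTheory.cond μ (A i) U := by
          gcongr with i
          rw [← ENNReal.ofReal_sum_of_nonneg (fun j _ => hw i j)]
          exact ENNReal.ofReal_le_of_le_toReal (hw1 i)
      _ = ∑ i, μ (A i ∩ U) := by
          refine Finset.sum_congr rfl fun i _ => ?_
          rw [mul_comm, ProbabilityTheory.cond_mul_eq_inter (hA i)]
      _ = μ (⋃ i ∈ Finset.univ, A i ∩ U) := by
          rw [measure_biUnion_finset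
            (fun i _ j _ hij => (hAd hij).mono inter_subset_left inter_subset_left)
            (fun i _ => (hA i).inter hU)]
      _ ≤ μ U := measure_mono (by simp)
  · refine Measure.le_iff.2 fun U hU => ?_
    rw [Measure.map_apply measurable_snd hU, ← univ_prod]
    simp only [Measure.coe_finsetSum, Finset.sum_apply, Measure.smul_apply, Measure.prod_prod,
      smul_eq_mul]
    rw [Finset.sum_comm]
    calc _ ≤ ∑ j, (∑ i, ENNReal.ofReal (w i j)) * ProbabilityTheory.cond ν (B j) U := by
          simp only [Finset.sum_mul]
          gcongr
          exact mul_le_of_le_one_left' prob_le_one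
      _ ≤ ∑ i, ν (B i) * ProbabilityTheory.cond ν (B i) U := by
          gcongr with j
          rw [← ENNReal.ofReal_sum_of_nonneg (fun i _ => hw i j)]
          exact ENNReal.ofReal_le_of_le_toReal (hw2 j)
      _ = ∑ i, ν (B i ∩ U) := by
          refine Finset.sum_congr rfl fun i _ => ?_
          rw [mul_comm, ProbabilityTheory.cond_mul_eq_inter (hB i)]
      _ = ν (⋃ i ∈ Finset.univ, B i ∩ U) := by
          rw [measure_biUnion_finset
            (fun i _ j _ hij => (hBd hij).mono inter_subset_left inter_subset_left)
            (fun i _ => (hB i).inter hU)]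
      _ ≤ ν U := measure_mono (by simp)
  · rw [ENNReal.ofReal_sum_of_nonneg (fun i _ => Finset.sum_nonneg fun j _ => hw i j)]
    simp only [Measure.coe_finsetSum, Finset.sum_apply, Measure.smul_apply, smul_eq_mul]
    refine Finset.sum_le_sum fun i _ => ?_
    rw [ENNReal.ofReal_sum_of_nonneg (fun j _ => hw i j)]
    refine Finset.sum_le_sum fun j _ => ?_
    by_cases h0 : w i j = 0
    · simp [h0]
    have hpos : 0 < w i j := lt_of_le_of_ne (hw i j) (Ne.symm h0)
    have hAi : μ (A i) ≠ 0 := fun h => by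
      have := (Finset.single_le_sum (fun j _ => hw i j) (Finset.mem_univ j)).trans (hw1 i)
      simp [Measure.real, h] at this; linarith
    have hBj : ν (B j) ≠ 0 := fun h => by
      have := (Finset.single_le_sum (fun i _ => hw i j) (Finset.mem_univ i)).trans (hw2 j)
      simp [Measure.real, h] at this; linarith
    calc ENNReal.ofReal (w i j) = ENNReal.ofReal (w i j) *
          ((ProbabilityTheory.cond μ (A i)).prod (ProbabilityTheory.cond ν (B j)) (A i ×ˢ B j)) := by
          rw [Measure.prod_prod, ProbabilityTheory.cond_apply_self hAi (measure_ne_top _ _),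
            ProbabilityTheory.cond_apply_self hBj (measure_ne_top _ _), one_mul, mul_one]
      _ ≤ _ := by gcongr; exact hG i j h0

/-- Strassen's theorem with slack `η`, for the law of `f` under `μ` and the measure `ν`; the coupling
is one of `μ` and `ν`. -/
theorem exists_coupling_close {X Y : Type*} [MeasurableSpace X] [MetricSpace Y]
    [TopologicalSpace.SeparableSpace Y] [MeasurableSpace Y] [BorelSpace Y]
    (μ : Measure X) [IsProbabilityMeasure μ] (ν : Measure Y) [IsProbabilityMeasure ν]
    (f : X → Y) (hf : Measurable f) (ε : ℝ) (hε : 0 < ε)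
    (h : ∀ A, MeasurableSet A → ν A ≤ μ.map f (thickening ε A) + ENNReal.ofReal ε)
    (η : ℝ) (hη : 0 < η) :
    ∃ ξ : Measure (X × Y), ξ.map Prod.fst = μ ∧ ξ.map Prod.snd = ν ∧
      ENNReal.ofReal (1 - (ε + η)) ≤ ξ {p | dist (f p.1) p.2 ≤ ε + η} := by
  classical
  have : Nonempty Y := nonempty_of_isProbabilityMeasure ν
  obtain ⟨g, hg, hgd⟩ := exists_measurable_index Y (η / 2) (half_pos hη)
  have hgf : Measurable (fun x => g (f x)) := hg.comp hf
  obtain ⟨M₁, hM₁⟩ := exists_tail_le (μ.map (fun x => g (f x))) (η / 4) (by positivity)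
  obtain ⟨M₂, hM₂⟩ := exists_tail_le (ν.map g) (η / 4) (by positivity)
  -- The cells with index at least `M` carry mass less than `η / 4` for either measure.
  set M := max M₁ M₂
  have hT1 := hM₁ M (le_max_left _ _)
  have hT2 := hM₂ M (le_max_right _ _)
  rw [map_measureReal_apply hgf measurableSet_Ici] at hT1
  rw [map_measureReal_apply hg measurableSet_Ici] at hT2
  let A : Fin M → Set X := fun i => (fun x => g (f x)) ⁻¹' {(i : ℕ)}
  let B : Fin M → Set Y := fun j => g ⁻¹' {(j : ℕ)}
  have hA : ∀ i, MeasurableSet (A i) := fun i => hgf (measurableSet_singleton _)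
  have hB : ∀ i, MeasurableSet (B i) := fun i => hg (measurableSet_singleton _)
  have hAd : Pairwise (Function.onFun Disjoint A) := fun i j hij =>
    Disjoint.preimage _ (by simpa [Fin.ext_iff] using hij)
  have hBd : Pairwise (Function.onFun Disjoint B) := fun i j hij =>
    Disjoint.preimage _ (by simpa [Fin.ext_iff] using hij)
  let R : Fin M → Fin M → Prop := fun i j => ∃ x ∈ A i, ∃ y ∈ B j, dist (f x) y < ε
  obtain ⟨w, hw, hw1, hw2, hwR, hwt⟩ := exists_transport (fun i => μ.real (A i))
    (fun j => ν.real (B j)) (fun _ => measureReal_nonneg) (fun _ => measureReal_nonneg) R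
    (ε + η / 4) (by positivity) (by
      intro J
      suffices key : ∀ K : Finset (Fin M), (∀ i, i ∈ K ↔ ∃ j ∈ J, R i j) →
          ∑ j ∈ J, ν.real (B j) ≤ ∑ i ∈ K, μ.real (A i) + (ε + η / 4) from
        key _ fun i => by simp
      intro K hK
      rw [← measureReal_biUnion_finset (fun i _ j _ hij => hBd hij) (fun i _ => hB i),
        ← measureReal_biUnion_finset (fun i _ j _ hij => hAd hij) (fun i _ => hA i)]
      have hms : MeasurableSet (⋃ j ∈ J, B j) := Finset.measurableSet_biUnion _ fun i _ => hB i
      have h1 := h _ hms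
      rw [Measure.map_apply hf isOpen_thickening.measurableSet] at h1
      have h2 : f ⁻¹' thickening ε (⋃ j ∈ J, B j) ⊆
          (⋃ i ∈ K, A i) ∪ (fun x => g (f x)) ⁻¹' Ici M := by
        intro x hx
        simp only [mem_preimage, mem_thickening_iff, mem_iUnion] at hx
        obtain ⟨y, ⟨j, hj, hy⟩, hd⟩ := hx
        rcases lt_or_ge (g (f x)) M with hlt | hge
        · left
          simp only [mem_iUnion]
          refine ⟨⟨_, hlt⟩, ?_, rfl⟩
          exact (hK _).2 ⟨j, hj, x, rfl, y, hy, hd⟩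
        · exact Or.inr hge
      have h3 : ν.real (⋃ j ∈ J, B j) ≤ μ.real (f ⁻¹' thickening ε (⋃ j ∈ J, B j)) + ε := by
        have := ENNReal.toReal_mono (by simp) h1
        rwa [ENNReal.toReal_add (by simp) (by simp), ENNReal.toReal_ofReal hε.le] at this
      have h4 := (measureReal_mono (μ := μ) h2).trans (measureReal_union_le _ _)
      linarith) (η / 4) (by positivity)
  have hqt : 1 - η / 4 ≤ ∑ j, ν.real (B j) := by
    have h1 : ∑ j, ν.real (B j) = ν.real (⋃ j ∈ Finset.univ, B j) :=
      (measureReal_biUnion_finset (fun i _ j _ hij => hBd hij) (fun i _ => hB i)).symm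
    have h2 : (univ : Set Y) ⊆ (⋃ j ∈ Finset.univ, B j) ∪ g ⁻¹' Ici M := by
      intro y _
      rcases lt_or_ge (g y) M with hlt | hge
      · left
        simp only [mem_iUnion]
        exact ⟨⟨_, hlt⟩, Finset.mem_univ _, rfl⟩
      · exact Or.inr hge
    have h3 := (measureReal_mono (μ := ν) h2).trans (measureReal_union_le _ _)
    rw [probReal_univ] at h3
    linarith
  obtain ⟨ξ₀, hξ1, hξ2, hξG⟩ := exists_measure_of_weights μ ν A B hA hB hAd hBd w hw hw1 hw2
    {p | dist (f p.1) p.2 ≤ ε + η} (by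
      rintro i j hij ⟨x, y⟩ ⟨hx, hy⟩
      obtain ⟨x', hx', y', hy', hd⟩ := hwR i j hij
      have h1 := hgd (f x) (f x') (hx.trans hx'.symm)
      have h2 := hgd y' y (hy'.trans hy.symm)
      have h3 := dist_triangle4 (f x) (f x') y' y
      simp only [mem_ofPred_eq]
      linarith)
  obtain ⟨ξ, h1, h2, h3⟩ := exists_coupling_ge μ ν ξ₀ hξ1 hξ2
  exact ⟨ξ, h1, h2, (ENNReal.ofReal_le_ofReal (by linarith)).trans (hξG.trans (h3 _))⟩

/-! ### Distortion and the Prokhorov distance -/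

theorem setDis_le {X Y : Type*} [MetricSpace X] [MetricSpace Y] {S : Set (X × Y)} {r : ℝ}
    (h : ∀ p ∈ S, ∀ q ∈ S, |dist p.1 q.1 - dist p.2 q.2| ≤ r) :
    setDis S ≤ ENNReal.ofReal r :=
  iSup₂_le fun p hp => iSup₂_le fun q hq => ENNReal.ofReal_le_ofReal (h p hp q hq)

theorem abs_le_of_setDis_le {X Y : Type*} [MetricSpace X] [MetricSpace Y] {S : Set (X × Y)}
    {r : ℝ} (hr : 0 ≤ r) (h : setDis S ≤ ENNReal.ofReal r) {p q : X × Y} (hp : p ∈ S)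
    (hq : q ∈ S) : |dist p.1 q.1 - dist p.2 q.2| ≤ r := by
  refine (ENNReal.ofReal_le_ofReal_iff hr).1 (le_trans ?_ h)
  exact le_trans (le_iSup₂ (f := fun q (_ : q ∈ S) =>
      ENNReal.ofReal |dist p.1 q.1 - dist p.2 q.2|) q hq)
    (le_iSup₂ (f := fun p (_ : p ∈ S) => ⨆ (q ∈ S),
      ENNReal.ofReal |dist p.1 q.1 - dist p.2 q.2|) p hp)

/-- The infimum is over a nonempty set (it contains `1`), and the defining condition is monotone in
the radius, so it holds at every radius above the distance. -/
theorem prokhorov_of_lt {Z : Type*} [MetricSpace Z] [MeasurableSpace Z] (μ ν : Measure Z)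
    [IsProbabilityMeasure ν] {r : ℝ} (h : prokhorovDist μ ν < r) {A : Set Z}
    (hA : MeasurableSet A) : ν A ≤ μ (thickening r A) + ENNReal.ofReal r := by
  have hne : {ε : ℝ | 0 < ε ∧ ∀ A : Set Z, MeasurableSet A →
      ν A ≤ μ (thickening ε A) + ENNReal.ofReal ε}.Nonempty :=
    ⟨1, one_pos, fun A _ => by simpa using le_add_left prob_le_one⟩
  obtain ⟨s, ⟨_, hs⟩, hsr⟩ := exists_lt_of_csInf_lt hne h
  exact (hs A hA).trans (add_le_add (measure_mono (thickening_mono hsr.le A))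
    (ENNReal.ofReal_le_ofReal hsr.le))

theorem prokhorovDist_le {Z : Type*} [MetricSpace Z] [MeasurableSpace Z] (μ ν : Measure Z)
    {r : ℝ} (hr : 0 < r)
    (h : ∀ A, MeasurableSet A → ν A ≤ μ (thickening r A) + ENNReal.ofReal r) :
    prokhorovDist μ ν ≤ r :=
  csInf_le ⟨0, fun _ hs => hs.1.le⟩ ⟨hr, h⟩

/-! ### The two implications -/

theorem boxDist_le_of_isMMIso {X Y : Type*} [MetricSpace X] [MeasurableSpace X]
    (μX : Measure X) [IsProbabilityMeasure μX]
    [MetricSpace Y] [TopologicalSpace.SeparableSpace Y]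
    [MeasurableSpace Y] [BorelSpace Y] (μY : Measure Y) [IsProbabilityMeasure μY]
    (ε : ℝ) (hε : 0 < ε) (f : X → Y) (hf : IsMMIso μX μY ε f) :
    boxDist μX μY ≤ ENNReal.ofReal (3 * ε) := by
  obtain ⟨hfm, ⟨X', hX', hμX', hdis⟩, hP⟩ := hf
  have := UniformSpace.secondCountable_of_separable Y
  suffices H : ∀ η : ℝ, 0 < η → boxDist μX μY ≤ ENNReal.ofReal (3 * ε + η) by
    refine ge_of_tendsto (x := 𝓝[>] (0 : ℝ)) (f := fun η => ENNReal.ofReal (3 * ε + η)) ?_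
      (eventually_nhdsWithin_of_forall fun η hη => H η hη)
    have : Continuous fun η : ℝ => ENNReal.ofReal (3 * ε + η) :=
      ENNReal.continuous_ofReal.comp (by fun_prop)
    simpa using (this.tendsto 0).mono_left nhdsWithin_le_nhds
  intro η hη
  obtain ⟨ξ, h1, h2, h3⟩ := exists_coupling_close μX μY f hfm (ε + η / 4) (by positivity)
    (fun A hA => prokhorov_of_lt _ _ (by linarith) hA) (η / 4) (by positivity)
  have hξ : IsProbabilityMeasure ξ := ⟨by
    rw [← preimage_univ (f := Prod.fst), ← Measure.map_apply measurable_fst .univ, h1,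
      measure_univ]⟩
  set r := ε + η / 4 + η / 4 with hr
  have hGm : MeasurableSet {p : X × Y | dist (f p.1) p.2 ≤ r} :=
    measurableSet_le ((hfm.comp measurable_fst).dist measurable_snd) measurable_const
  have hXm : MeasurableSet (Prod.fst ⁻¹' X' : Set (X × Y)) := measurable_fst hX'
  refine iInf₂_le_of_le ξ ⟨h1, h2⟩ (iInf₂_le_of_le
    (Prod.fst ⁻¹' X' ∩ {p : X × Y | dist (f p.1) p.2 ≤ r}) (hXm.inter hGm) (max_le ?_ ?_))
  · rw [← prob_compl_eq_one_sub (hXm.inter hGm), compl_inter]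
    refine (measure_union_le _ _).trans ?_
    rw [prob_compl_eq_one_sub hXm, prob_compl_eq_one_sub hGm,
      ← Measure.map_apply measurable_fst hX', h1]
    have e1 : 1 - μX X' ≤ ENNReal.ofReal ε := by
      rw [tsub_le_iff_left]
      calc (1 : ℝ≥0∞) = ENNReal.ofReal ((1 - ε) + ε) := by simp
        _ ≤ _ := ENNReal.ofReal_add_le.trans (by gcongr)
    have e2 : 1 - ξ {p : X × Y | dist (f p.1) p.2 ≤ r} ≤ ENNReal.ofReal r := by
      rw [tsub_le_iff_left]
      calc (1 : ℝ≥0∞) = ENNReal.ofReal ((1 - r) + r) := by simp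
        _ ≤ _ := ENNReal.ofReal_add_le.trans (by gcongr)
    refine (add_le_add e1 e2).trans ?_
    rw [← ENNReal.ofReal_add hε.le (by positivity)]
    exact ENNReal.ofReal_le_ofReal (by linarith)
  · refine setDis_le ?_
    rintro ⟨x, y⟩ ⟨hx, hxy⟩ ⟨x', y'⟩ ⟨hx', hxy'⟩
    have a1 := abs_le.1 (hdis x hx x' hx')
    have a2 : dist (f x) y ≤ r := hxy
    have a3 : dist (f x') y' ≤ r := hxy'
    have a4 := dist_triangle4 (f x) y y' (f x')
    have a5 := dist_triangle4 y (f x) (f x') y'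
    rw [dist_comm y' (f x')] at a4
    rw [dist_comm y (f x)] at a5
    simp only
    rw [abs_le]
    constructor <;> linarith [a1.1, a1.2]

theorem exists_isMMIso_of_boxDist_lt {X Y : Type*} [MetricSpace X]
    [TopologicalSpace.SeparableSpace X] [MeasurableSpace X] [BorelSpace X]
    (μX : Measure X) [IsProbabilityMeasure μX]
    [MetricSpace Y] [MeasurableSpace Y] [BorelSpace Y]
    (μY : Measure Y) [IsProbabilityMeasure μY]
    (ε : ℝ) (hε : 0 < ε) (h : boxDist μX μY < ENNReal.ofReal ε) :
    ∃ f : X → Y, IsMMIso μX μY (3 * ε) f := by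
  classical
  simp only [boxDist, iInf_lt_iff] at h
  obtain ⟨ξ, ⟨h1, h2⟩, S, hS, hlt⟩ := h
  obtain ⟨hm, hd⟩ := max_lt_iff.1 hlt
  have hξ : IsProbabilityMeasure ξ := ⟨by
    rw [← preimage_univ (f := Prod.fst), ← Measure.map_apply measurable_fst .univ, h1,
      measure_univ]⟩
  obtain ⟨r, hr0, hdr, hrε⟩ : ∃ r : ℝ, 0 ≤ r ∧ setDis S ≤ ENNReal.ofReal r ∧ r < ε :=
    ⟨(setDis S).toReal, ENNReal.toReal_nonneg, by rw [ENNReal.ofReal_toReal hd.ne_top],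
      (ENNReal.lt_ofReal_iff_toReal_lt hd.ne_top).1 hd⟩
  have hX0 : Nonempty X := nonempty_of_isProbabilityMeasure μX
  have hY0 : Nonempty Y := nonempty_of_isProbabilityMeasure μY
  obtain ⟨g, hg, hgd⟩ := exists_measurable_index X (ε - r) (sub_pos.2 hrε)
  -- `T` indexes the cells that meet the projection of `S`; `c n` is a point of `S` over cell `n`.
  let T : Set ℕ := {n | ∃ p ∈ S, g p.1 = n}
  choose! c hcS hcg using fun (n : ℕ) (hn : n ∈ T) => hn
  let f : X → Y := fun x => (c (g x)).2
  have hf : Measurable f := (measurable_of_countable fun n => (c n).2).comp hg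
  have hXm : MeasurableSet (g ⁻¹' T) := hg (MeasurableSet.of_discrete)
  refine ⟨f, hf, ⟨g ⁻¹' T, hXm, ?_, ?_⟩, ?_⟩
  · have hsub : S ⊆ Prod.fst ⁻¹' (g ⁻¹' T) := fun p hp => ⟨p, hp, rfl⟩
    have e1 : ξ S ≤ μX (g ⁻¹' T) := by
      rw [← h1, Measure.map_apply measurable_fst hXm]
      exact measure_mono hsub
    refine le_trans ?_ e1
    rw [ENNReal.ofReal_sub _ (by positivity), ENNReal.ofReal_one, tsub_le_iff_right]
    rw [← tsub_le_iff_left]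
    exact hm.le.trans (ENNReal.ofReal_le_ofReal (by linarith))
  · intro x hx x' hx'
    have a1 := abs_le.1 (abs_le_of_setDis_le hr0 hdr (hcS _ hx) (hcS _ hx'))
    have a2 := hgd x (c (g x)).1 (hcg _ hx).symm
    have a3 := hgd x' (c (g x')).1 (hcg _ hx').symm
    have a4 := dist_triangle4 x (c (g x)).1 (c (g x')).1 x'
    have a5 := dist_triangle4 (c (g x)).1 x x' (c (g x')).1
    rw [dist_comm (c (g x')).1 x'] at a4
    rw [dist_comm (c (g x)).1 x] at a5
    change |dist x x' - dist (c (g x)).2 (c (g x')).2| ≤ 3 * ε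
    rw [abs_le]
    constructor <;> linarith [a1.1, a1.2]
  · refine (prokhorovDist_le _ _ hε fun A hA => ?_).trans (by linarith : ε ≤ 3 * ε)
    rw [Measure.map_apply hf isOpen_thickening.measurableSet, ← h1, ← h2,
      Measure.map_apply measurable_snd hA,
      Measure.map_apply measurable_fst (hf isOpen_thickening.measurableSet)]
    -- If `(x, y) ∈ S` lies over the same cell as `c (g x) ∈ S`, then
    -- `d (f x) y ≤ d (c (g x)).1 x + r < (ε - r) + r = ε`.
    have hsub : (Prod.snd ⁻¹' A : Set (X × Y)) ⊆
        Prod.fst ⁻¹' (f ⁻¹' thickening ε A) ∪ Sᶜ := by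
      rintro ⟨x, y⟩ hy
      by_cases hp : (x, y) ∈ S
      · left
        have hx : g x ∈ T := ⟨_, hp, rfl⟩
        have a1 := abs_le.1 (abs_le_of_setDis_le hr0 hdr (hcS _ hx) hp)
        have a2 := hgd (c (g x)).1 x (hcg _ hx)
        refine mem_thickening_iff.2 ⟨y, hy, ?_⟩
        change dist (c (g x)).2 y < ε
        linarith [a1.1]
      · exact Or.inr hp
    refine (measure_mono hsub).trans ((measure_union_le _ _).trans ?_)
    rw [prob_compl_eq_one_sub hS]
    gcongr

/-- For mm spaces `X, Y` and `ε > 0`: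
(i) if there is an `ε`-mm isomorphism `f : X → Y`, then `□(X,Y) ≤ 3ε`;
(ii) if `□(X,Y) < ε`, then there is a `3ε`-mm isomorphism from `X` to `Y`. -/
theorem boxDist_mmIso
    {X : Type*} [MetricSpace X] [CompleteSpace X] [TopologicalSpace.SeparableSpace X]
    [MeasurableSpace X] [BorelSpace X] (μX : Measure X) [IsProbabilityMeasure μX]
    [μX.IsOpenPosMeasure]
    {Y : Type*} [MetricSpace Y] [CompleteSpace Y] [TopologicalSpace.SeparableSpace Y]
    [MeasurableSpace Y] [BorelSpace Y] (μY : Measure Y) [IsProbabilityMeasure μY]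
    [μY.IsOpenPosMeasure]
    (ε : ℝ) (hε : 0 < ε) :
    ((∃ f : X → Y, IsMMIso μX μY ε f) → boxDist μX μY ≤ ENNReal.ofReal (3 * ε)) ∧
    (boxDist μX μY < ENNReal.ofReal ε → ∃ f : X → Y, IsMMIso μX μY (3 * ε) f) := by
  exact ⟨fun ⟨f, hf⟩ => boxDist_le_of_isMMIso μX μY ε hε f hf,
    exists_isMMIso_of_boxDist_lt μX μY ε hε⟩

end
end
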